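/- arXiv:1805.08135 — 2 statements merged into one kernel-verified Lean document; each statement's English description precedes it below -/
import Mathlib

section
/- Let n ≥ 2 be an integer and 0 < λ ≤ Λ real constants, and set M₁ := 8·(36n)^{max{1, (n−1)Λ/λ − 1}} and M₂ := 432·n·M₁. Let Ω ⊆ ℝⁿ be an open set containing the closed ball of radius 2√n centered at 0, and let v : Ω → ℝ be a continuous viscosity supersolution of M⁻_{λ,Λ}(D²v) ≤ 0 in Ω. If G⁻_{1/(8n)}(v,Ω) ∩ Q₃ ≠ ∅, then G⁻_{M₂}(v,Ω) ∩ Q_{1/(4√n)} ≠ ∅. -/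
open MeasureTheory Metric
open scoped InnerProductSpace ENNReal

noncomputable section

abbrev Euc (n : ℕ) := EuclideanSpace ℝ (Fin n)

/-- Loewner order -/
def matLE {n : ℕ} (A B : Matrix (Fin n) (Fin n) ℝ) : Prop := (B - A).PosSemidef

/-- Pucci minimal operator -/
def pucciInf {n : ℕ} (lam Lam : ℝ) (M : Matrix (Fin n) (Fin n) ℝ) : ℝ :=
  sInf {t : ℝ | ∃ A : Matrix (Fin n) (Fin n) ℝ,
    A.IsSymm ∧ matLE (lam • 1) A ∧ matLE A (Lam • 1) ∧ t = (A * M).trace}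

/-- Hessian matrix via second iterated Fréchet derivative -/
def hessianMatrix {n : ℕ} (φ : Euc n → ℝ) (x : Euc n) : Matrix (Fin n) (Fin n) ℝ :=
  Matrix.of fun i j =>
    iteratedFDeriv ℝ 2 φ x ![EuclideanSpace.single i 1, EuclideanSpace.single j 1]

/-- viscosity supersolution of M⁻(D²v) ≤ 0 -/
def ViscSupersol {n : ℕ} (lam Lam : ℝ) (Ω : Set (Euc n)) (v : Euc n → ℝ) : Prop :=
  ∀ x₀ ∈ Ω, ∀ φ : Euc n → ℝ,
    (∃ U : Set (Euc n), IsOpen U ∧ x₀ ∈ U ∧ ContDiffOn ℝ 2 φ U) →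
    IsLocalMinOn (fun x => v x - φ x) Ω x₀ →
    pucciInf lam Lam (hessianMatrix φ x₀) ≤ 0

def Gm {n : ℕ} (K : ℝ) (v : Euc n → ℝ) (Ω : Set (Euc n)) : Set (Euc n) :=
  {xb | xb ∈ Ω ∧ ∃ p : Euc n, ∀ x ∈ Ω, v x ≥ v xb + ⟪p, x - xb⟫_ℝ - K / 2 * ‖x - xb‖ ^ 2}

def Am {n : ℕ} (K : ℝ) (v : Euc n → ℝ) (Ω : Set (Euc n)) : Set (Euc n) := Ω \ Gm K v Ω

/-- open cube of side r centered at x -/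
def cube {n : ℕ} (r : ℝ) (x : Euc n) : Set (Euc n) := {y | ∀ i, |y i - x i| < r / 2}

/-!
Subtracting from `v` the affine part of the paraboloid that touches it at `a ∈ Q₃` leaves a
supersolution `u` with `u a = 0` that is bounded below by a flat concave paraboloid. On the boundary
of the ball of radius `ρ = 2√n` it is therefore not very negative. As `3 (ρ / |x|) ^ q` plus a small
multiple of `|x|²` is a strict subsolution away from the origin, the minimum principle forces
`u ≤ 3 (ρ / r) ^ q` somewhere in the small ball of radius `r = 1 / (18√n)`. A paraboloid
centered at the origin and of opening `M` a large multiple of `(ρ / r) ^ q / r ^ 2`, slid from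
below until it touches `u`, can then touch it only near the origin.
-/

section PucciOperator

open Matrix

lemma posSemidef_dotProduct_mulVec_le_trace_mul {m : Type*} [Fintype m] {B : Matrix m m ℝ}
    (hB : B.PosSemidef) (x : m → ℝ) : x ⬝ᵥ B *ᵥ x ≤ B.trace * (x ⬝ᵥ x) := by
  classical
  open scoped MatrixOrder in
  obtain ⟨C, rfl⟩ := CStarAlgebra.nonneg_iff_eq_star_mul_self.1 hB.nonneg
  have h_trace : (Cᵀ * C).trace = ∑ k, ∑ i, C k i ^ 2 := by
    simp only [trace, diag, mul_apply, transpose_apply, ← sq]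
    exact Finset.sum_comm
  rw [star_eq_conjTranspose, conjTranspose_eq_transpose_of_trivial, h_trace, ← mulVec_mulVec,
    dotProduct_mulVec, vecMul_transpose, Finset.sum_mul]
  refine Finset.sum_le_sum fun k _ => ?_
  simpa only [mulVec, dotProduct, ← sq] using Finset.sum_mul_sq_le_sq_mul_sq Finset.univ (C k) x

variable {n : ℕ} {lam Lam : ℝ} {A B : Matrix (Fin n) (Fin n) ℝ}

lemma matLE.dotProduct_mulVec_le (h : matLE A B) (x : Fin n → ℝ) :
    x ⬝ᵥ A *ᵥ x ≤ x ⬝ᵥ B *ᵥ x := by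
  simpa [sub_mulVec, dotProduct_sub] using h.dotProduct_mulVec_nonneg x

lemma matLE.trace_le (h : matLE A B) : A.trace ≤ B.trace := by
  simpa [trace_sub] using h.trace_nonneg

lemma matLE.trace_mul_le (h : matLE A (Lam • 1)) (x : Fin n → ℝ) :
    A.trace * (x ⬝ᵥ x) ≤ (n - 1) * Lam * (x ⬝ᵥ x) + x ⬝ᵥ A *ᵥ x := by
  have := posSemidef_dotProduct_mulVec_le_trace_mul h x
  simp only [sub_mulVec, smul_mulVec, one_mulVec, dotProduct_sub, dotProduct_smul, trace_sub,
    trace_smul, trace_one, Fintype.card_fin, smul_eq_mul] at this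
  linarith

lemma le_pucciInf {M : Matrix (Fin n) (Fin n) ℝ} {t : ℝ} (hLam : lam ≤ Lam)
    (h : ∀ A, matLE (lam • 1) A → matLE A (Lam • 1) → t ≤ (A * M).trace) :
    t ≤ pucciInf lam Lam M := by
  refine le_csInf ⟨_, lam • 1, by simp [Matrix.IsSymm], ?_, ?_, rfl⟩ ?_
  · simpa only [matLE, sub_self] using PosSemidef.zero
  · simpa only [matLE, ← sub_smul] using PosSemidef.one.smul (sub_nonneg.2 hLam)
  · rintro _ ⟨A, -, h₁, h₂, rfl⟩
    exact h A h₁ h₂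

lemma mul_le_pucciInf_smul_one_add_smul_vecMulVec (hLam : lam ≤ Lam) {q ε k : ℝ}
    (hε : 0 ≤ ε) (hk : 0 ≤ k) (hq₀ : 0 ≤ q + 1) (hq : (n - 1) * Lam ≤ (q + 1) * lam)
    (x : Fin n → ℝ) :
    ε * (n * lam) ≤ pucciInf lam Lam ((ε - k * (x ⬝ᵥ x)) • 1 + (k * (q + 2)) • vecMulVec x x) := by
  refine le_pucciInf hLam fun A h₁ h₂ => ?_
  have h_expand : (A * ((ε - k * (x ⬝ᵥ x)) • 1 + (k * (q + 2)) • vecMulVec x x)).trace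
      = ε * A.trace + k * ((q + 2) * (x ⬝ᵥ A *ᵥ x) - A.trace * (x ⬝ᵥ x)) := by
    rw [mul_add, mul_smul_one, mul_smul_comm, mul_vecMulVec, trace_add, trace_smul, trace_smul,
      trace_vecMulVec, dotProduct_comm (A *ᵥ x), smul_eq_mul, smul_eq_mul]
    ring
  have h_trace : n * lam ≤ A.trace := by
    simpa [mul_comm] using h₁.trace_le
  have h_lower : lam * (x ⬝ᵥ x) ≤ x ⬝ᵥ A *ᵥ x := by
    simpa [smul_mulVec] using h₁.dotProduct_mulVec_le x
  have h_xx : 0 ≤ x ⬝ᵥ x := by simpa using dotProduct_star_self_nonneg x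
  have h_bracket : A.trace * (x ⬝ᵥ x) ≤ (q + 2) * (x ⬝ᵥ A *ᵥ x) :=
    calc A.trace * (x ⬝ᵥ x) ≤ (n - 1) * Lam * (x ⬝ᵥ x) + x ⬝ᵥ A *ᵥ x := h₂.trace_mul_le x
      _ ≤ (q + 1) * lam * (x ⬝ᵥ x) + x ⬝ᵥ A *ᵥ x := by gcongr
      _ = (q + 1) * (lam * (x ⬝ᵥ x)) + x ⬝ᵥ A *ᵥ x := by ring
      _ ≤ (q + 1) * (x ⬝ᵥ A *ᵥ x) + x ⬝ᵥ A *ᵥ x := by gcongr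
      _ = (q + 2) * (x ⬝ᵥ A *ᵥ x) := by ring
  rw [h_expand]
  have := mul_nonneg hk (sub_nonneg.2 h_bracket)
  have := mul_le_mul_of_nonneg_left h_trace hε
  linarith

end PucciOperator

section Hessian

variable {n : ℕ} {φ : Euc n → ℝ} {x : Euc n}

lemma hessianMatrix_add_affine (hφ : ContDiffAt ℝ 2 φ x) (c : ℝ) (p a : Euc n) :
    hessianMatrix (fun y => φ y + (c + ⟪p, y - a⟫_ℝ)) x = hessianMatrix φ x := by
  have h_grad : fderiv ℝ (fun y => φ y + (c + ⟪p, y - a⟫_ℝ)) =ᶠ[nhds x]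
      fun y => fderiv ℝ φ y + innerSL ℝ p := by
    filter_upwards [hφ.eventually (by simp)] with y hy
    have h_affine : HasFDerivAt (fun y => c + ⟪p, y - a⟫_ℝ) (innerSL ℝ p) y :=
      ((innerSL ℝ p).hasFDerivAt.comp y ((hasFDerivAt_id y).sub_const a)).const_add c
    exact ((hy.differentiableAt (by simp)).hasFDerivAt.add h_affine).fderiv
  ext i j
  simp only [hessianMatrix, Matrix.of_apply, iteratedFDeriv_two_apply, h_grad.fderiv_eq,
    fderiv_add_const]

lemma hessianMatrix_eq_of_radial_gradient {g : Euc n → ℝ} {g' : ℝ}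
    (hφ : ∀ᶠ y in nhds x, HasFDerivAt φ (g y • innerSL ℝ y) y)
    (hg : HasFDerivAt g (g' • innerSL ℝ x) x) :
    hessianMatrix φ x = g x • 1 + g' • Matrix.vecMulVec x x := by
  have h_grad : fderiv ℝ φ =ᶠ[nhds x] fun y => g y • innerSL ℝ y :=
    hφ.mono fun y hy => hy.fderiv
  have h_prod : HasFDerivAt (fun y => g y • innerSL ℝ y) _ x :=
    hg.smul (innerSL ℝ (E := Euc n)).hasFDerivAt
  have h_hess (u w : Euc n) : fderiv ℝ (fun y => g y • innerSL ℝ y) x u w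
      = g x * ⟪u, w⟫_ℝ + g' * ⟪x, u⟫_ℝ * ⟪x, w⟫_ℝ := by
    rw [h_prod.fderiv]
    rfl
  ext i j
  rw [hessianMatrix, Matrix.of_apply, iteratedFDeriv_two_apply, h_grad.fderiv_eq]
  simp [h_hess, Matrix.vecMulVec_apply, Matrix.one_apply, EuclideanSpace.inner_single_right,
    mul_assoc, eq_comm]


end Hessian

section Barrier

variable {E : Type*} [NormedAddCommGroup E]

/-- The function `c |x|^(-q) + ε |x|²`: a multiple of the radial singular solution, made a strict
subsolution away from the origin by a small paraboloid. The value at the origin is junk. -/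
def barrier (c q ε : ℝ) (x : E) : ℝ := c * ‖x‖ ^ (-q) + ε * ‖x‖ ^ 2

lemma barrier_mul_rpow (c q ε : ℝ) {ρ : ℝ} (hρ : 0 ≤ ρ) (x : E) :
    barrier (c * ρ ^ q) q ε x = c * (ρ / ‖x‖) ^ q + ε * ‖x‖ ^ 2 := by
  rw [barrier, Real.div_rpow hρ (norm_nonneg x), Real.rpow_neg (norm_nonneg x)]
  ring

lemma four_lt_barrier {q ε ρ : ℝ} (hq : 1 ≤ q) (hε : 0 < ε) {x : E} (hx : x ≠ 0)
    (hxρ : ‖x‖ ≤ 3 / 4 * ρ) : 4 < barrier (3 * ρ ^ q) q ε x := by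
  have hx_pos : 0 < ‖x‖ := norm_pos_iff.2 hx
  have h_ratio : 4 / 3 ≤ ρ / ‖x‖ := by
    rw [le_div_iff₀ hx_pos]
    linarith
  calc (4 : ℝ) = 3 * (4 / 3) := by norm_num
    _ ≤ 3 * (ρ / ‖x‖) ^ q := by
      gcongr
      exact h_ratio.trans (Real.self_le_rpow_of_one_le (by linarith) hq)
    _ < 3 * (ρ / ‖x‖) ^ q + ε * ‖x‖ ^ 2 := lt_add_of_pos_right _ (by positivity)
    _ = barrier (3 * ρ ^ q) q ε x := (barrier_mul_rpow 3 q ε (by linarith) x).symm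

variable [InnerProductSpace ℝ E] {x : E}

lemma hasFDerivAt_norm_rpow_of_ne_zero (s : ℝ) (hx : x ≠ 0) :
    HasFDerivAt (fun y : E => ‖y‖ ^ s) ((s * ‖x‖ ^ (s - 2)) • innerSL ℝ x) x := by
  have hx' : ‖x‖ ^ 2 ≠ 0 := by simpa using hx
  have h := ((hasStrictFDerivAt_norm_sq x).rpow_const (p := s / 2) (.inl hx')).hasFDerivAt
  simp_rw [← Real.rpow_natCast_mul (norm_nonneg _)] at h
  convert h using 1
  · ext; push_cast; ring_nf
  · rw [show ((2 : ℕ) : ℝ) * (s / 2 - 1) = s - 2 by push_cast; ring]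
    module

lemma contDiffOn_barrier (c q ε : ℝ) : ContDiffOn ℝ 2 (barrier c q ε) ({0}ᶜ : Set E) := by
  intro x hx
  have h_rpow : ContDiffAt ℝ 2 (fun y : E => ‖y‖ ^ (-q)) x :=
    (contDiffAt_norm ℝ hx).rpow_const_of_ne (norm_ne_zero_iff.2 hx)
  exact ((contDiffAt_const.mul h_rpow).add
    (contDiffAt_const.mul (contDiff_norm_sq ℝ).contDiffAt)).contDiffWithinAt

lemma hasFDerivAt_barrier (c q ε : ℝ) (hx : x ≠ 0) :
    HasFDerivAt (barrier c q ε) ((2 * ε - c * q * ‖x‖ ^ (-q - 2)) • innerSL ℝ x) x := by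
  have h_sq : HasFDerivAt (fun y : E => ‖y‖ ^ 2) _ x := (hasStrictFDerivAt_norm_sq x).hasFDerivAt
  refine (((hasFDerivAt_norm_rpow_of_ne_zero (-q) hx).const_mul c).add
    (h_sq.const_mul ε)).congr_fderiv ?_
  module

lemma hessianMatrix_barrier {n : ℕ} (c q ε : ℝ) {x : Euc n} (hx : x ≠ 0) :
    hessianMatrix (barrier c q ε) x = (2 * ε - c * q * ‖x‖ ^ (-q - 2)) • 1
      + (c * q * (q + 2) * ‖x‖ ^ (-q - 4)) • Matrix.vecMulVec x x := by
  refine hessianMatrix_eq_of_radial_gradient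
    ((isOpen_ne.eventually_mem hx).mono fun y hy => hasFDerivAt_barrier c q ε hy) ?_
  refine (((hasFDerivAt_norm_rpow_of_ne_zero (-q - 2) hx).const_mul
    (c * q)).const_sub (2 * ε)).congr_fderiv ?_
  rw [show -q - 2 - 2 = -q - 4 by ring]
  module

lemma pucciInf_hessianMatrix_barrier_pos {n : ℕ} (hn : 0 < n) {lam Lam : ℝ} (hlam : 0 < lam)
    (hLam : lam ≤ Lam) {c q ε : ℝ} (hc : 0 ≤ c) (hq₀ : 0 ≤ q) (hq : (n - 1) * Lam ≤ (q + 1) * lam)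
    (hε : 0 < ε) {x : Euc n} (hx : x ≠ 0) :
    0 < pucciInf lam Lam (hessianMatrix (barrier c q ε) x) := by
  have hx' : 0 < ‖x‖ := norm_pos_iff.2 hx
  have h_xx : x.ofLp ⬝ᵥ x.ofLp = ‖x‖ ^ 2 := by
    simp only [EuclideanSpace.real_norm_sq_eq, dotProduct, ← sq]
  have h_pow : ‖x‖ ^ (-q - 2) = ‖x‖ ^ (-q - 4) * ‖x‖ ^ 2 := by
    rw [← Real.rpow_add_natCast hx'.ne']
    congr 1
    push_cast
    ring
  have h_lower := mul_le_pucciInf_smul_one_add_smul_vecMulVec hLam (ε := 2 * ε)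
    (k := c * q * ‖x‖ ^ (-q - 4)) (by positivity) (by positivity) (by linarith) hq x
  refine lt_of_lt_of_le (by positivity) (h_lower.trans_eq ?_)
  rw [hessianMatrix_barrier c q ε hx, h_xx, h_pow]
  ring_nf

end Barrier

section Supersolution

variable {n : ℕ} {lam Lam : ℝ} {Ω U : Set (Euc n)} {v φ : Euc n → ℝ}

lemma ViscSupersol.mono_of_isOpen (h : ViscSupersol lam Lam Ω v) (hU : IsOpen U) (hUΩ : U ⊆ Ω) :
    ViscSupersol lam Lam U v := by
  intro x hx φ hφ hmin
  exact h x (hUΩ hx) φ hφ ((hmin.isLocalMin (hU.mem_nhds hx)).on Ω)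

lemma ViscSupersol.sub_affine (h : ViscSupersol lam Lam Ω v) (c : ℝ) (p a : Euc n) :
    ViscSupersol lam Lam Ω (fun x => v x - (c + ⟪p, x - a⟫_ℝ)) := by
  rintro x hx φ ⟨U, hU, hxU, hφ⟩ hmin
  have h_affine : ContDiff ℝ 2 fun y => c + ⟪p, y - a⟫_ℝ :=
    contDiff_const.add (contDiff_const.inner ℝ (contDiff_id.sub contDiff_const))
  rw [← hessianMatrix_add_affine (hφ.contDiffAt (hU.mem_nhds hxU)) c p a]
  refine h x hx _ ⟨U, hU, hxU, hφ.add h_affine.contDiffOn⟩ ?_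
  simpa only [← sub_sub, sub_right_comm _ _ (φ _), add_comm (φ _)] using hmin

lemma ViscSupersol.exists_mem_frontier_isMinOn_closure (h : ViscSupersol lam Lam U v)
    (hU : IsOpen U) (hUb : Bornology.IsBounded U) (hUne : U.Nonempty)
    (hv : ContinuousOn v (closure U)) (hφc : ContinuousOn φ (closure U))
    (hφ : ContDiffOn ℝ 2 φ U) (hφpos : ∀ x ∈ U, 0 < pucciInf lam Lam (hessianMatrix φ x)) :
    ∃ y ∈ frontier U, IsMinOn (fun x => v x - φ x) (closure U) y := by
  obtain ⟨y, hy, hmin⟩ := hUb.isCompact_closure.exists_isMinOn hUne.closure (hv.sub hφc)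
  refine ⟨y, ⟨hy, fun hyU => ?_⟩, hmin⟩
  rw [hU.interior_eq] at hyU
  exact (hφpos y hyU).not_ge
    (h y hyU φ ⟨U, hU, hyU, hφ⟩ (hmin.on_subset subset_closure).localize)

end Supersolution

lemma frontier_ball_sdiff_closedBall_subset {X : Type*} [PseudoMetricSpace X] (x : X) (R r : ℝ) :
    frontier (ball x R \ closedBall x r) ⊆ sphere x R ∪ sphere x r := by
  rw [Set.sdiff_eq]
  refine (frontier_inter_subset _ _).trans (Set.union_subset_union ?_ ?_)
  · exact Set.inter_subset_left.trans frontier_ball_subset_sphere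
  · rw [frontier_compl]
    exact Set.inter_subset_right.trans frontier_closedBall_subset_sphere

section Growth

variable {n : ℕ} {lam Lam ρ r q : ℝ}

lemma ViscSupersol.exists_mem_spheres_sub_barrier_le {u : Euc n → ℝ} (hn : 0 < n)
    (hlam : 0 < lam) (hLam : lam ≤ Lam) (hq₀ : 0 ≤ q) (hq : (n - 1) * Lam ≤ (q + 1) * lam)
    (hr : 0 < r) (hsuper : ViscSupersol lam Lam (ball 0 ρ) u)
    (hu : ContinuousOn u (closedBall 0 ρ)) {c ε : ℝ} (hc : 0 ≤ c) (hε : 0 < ε) {a : Euc n}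
    (ha : a ∈ ball 0 ρ \ closedBall 0 r) :
    ∃ y ∈ sphere 0 ρ ∪ sphere 0 r, u y - barrier c q ε y ≤ u a - barrier c q ε a := by
  set U : Set (Euc n) := ball 0 ρ \ closedBall 0 r
  have hU : IsOpen U := isOpen_ball.sdiff isClosed_closedBall
  have hcl : closure U ⊆ closedBall 0 ρ :=
    (closure_mono Set.sdiff_subset).trans closure_ball_subset_closedBall
  have hcl₀ : closure U ⊆ {0}ᶜ :=
    calc closure U ⊆ (ball 0 r)ᶜ := closure_minimal
          (fun _ hx hxr => hx.2 (ball_subset_closedBall hxr)) isOpen_ball.isClosed_compl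
      _ ⊆ {0}ᶜ := Set.compl_subset_compl.2 (Set.singleton_subset_iff.2 (mem_ball_self hr))
  obtain ⟨y, hyU, hmin⟩ :=
    (hsuper.mono_of_isOpen hU Set.sdiff_subset).exists_mem_frontier_isMinOn_closure hU
      (isBounded_ball.subset Set.sdiff_subset) ⟨a, ha⟩ (hu.mono hcl)
      ((contDiffOn_barrier c q ε).continuousOn.mono hcl₀)
      ((contDiffOn_barrier c q ε).mono (subset_closure.trans hcl₀)) fun x hx =>
        pucciInf_hessianMatrix_barrier_pos hn hlam hLam hc hq₀ hq hε (hcl₀ (subset_closure hx))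
  exact ⟨y, frontier_ball_sdiff_closedBall_subset 0 ρ r hyU, hmin (subset_closure ha)⟩

-- If the bound fails, `u x - 3 (ρ / |x|) ^ q - |x|² / (8 ρ²)` is at least `-4` on both boundary
-- spheres of the annulus `r < |x| < ρ`, but less than `-4` at the point `a`.
lemma ViscSupersol.exists_mem_closedBall_le {u : Euc n → ℝ} (hn : 0 < n) (hlam : 0 < lam)
    (hLam : lam ≤ Lam) (hq₁ : 1 ≤ q) (hq : (n - 1) * Lam ≤ (q + 1) * lam) (hr : 0 < r)
    (hsuper : ViscSupersol lam Lam (ball 0 ρ) u) (hu : ContinuousOn u (closedBall 0 ρ))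
    (hsphere : ∀ x ∈ sphere 0 ρ, -(7 / 8) ≤ u x) {a : Euc n} (ha : ‖a‖ ≤ 3 / 4 * ρ)
    (hua : u a ≤ 0) : ∃ x ∈ closedBall 0 r, u x ≤ 3 * (ρ / r) ^ q := by
  by_contra! hlarge
  have hρ₀ : 0 ≤ ρ := by linarith [norm_nonneg a]
  have hra : r < ‖a‖ := by
    by_contra! har
    have h_pos : 0 < u a :=
      (show 0 ≤ 3 * (ρ / r) ^ q by positivity).trans_lt (hlarge a (mem_closedBall_zero_iff.2 har))
    exact h_pos.not_ge hua
  have hρ : 0 < ρ := by linarith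
  have ha_annulus : a ∈ ball 0 ρ \ closedBall 0 r :=
    ⟨mem_ball_zero_iff.2 (by linarith), fun har => hra.not_ge (mem_closedBall_zero_iff.1 har)⟩
  obtain ⟨y, hy, hya⟩ := hsuper.exists_mem_spheres_sub_barrier_le (c := 3 * ρ ^ q)
    (ε := 1 / (8 * ρ ^ 2)) hn hlam hLam (by linarith) hq hr hu (by positivity) (by positivity)
    ha_annulus
  have h_barrier_a : 4 < barrier (3 * ρ ^ q) q (1 / (8 * ρ ^ 2)) a :=
    four_lt_barrier hq₁ (by positivity) (norm_pos_iff.1 (hr.trans hra)) ha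
  have h_sphere_y : -4 ≤ u y - barrier (3 * ρ ^ q) q (1 / (8 * ρ ^ 2)) y := by
    rw [barrier_mul_rpow _ _ _ hρ₀]
    have h_eighth : 1 / (8 * ρ ^ 2) * ρ ^ 2 = 1 / 8 := by field_simp
    rcases hy with hyρ | hyr
    · have := hsphere y hyρ
      rw [mem_sphere_zero_iff_norm.1 hyρ, div_self hρ.ne', Real.one_rpow, h_eighth]
      linarith
    · have := hlarge y (sphere_subset_closedBall hyr)
      have : 1 / (8 * ρ ^ 2) * r ^ 2 ≤ 1 / 8 := by
        rw [← h_eighth]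
        gcongr
        linarith
      rw [mem_sphere_zero_iff_norm.1 hyr]
      linarith
  linarith

end Growth

section TouchingParaboloids

variable {n : ℕ} {K s : ℝ} {Ω : Set (Euc n)} {v : Euc n → ℝ}

lemma Gm_sub_affine (K : ℝ) (v : Euc n → ℝ) (Ω : Set (Euc n)) (c : ℝ) (p a : Euc n) :
    Gm K (fun x => v x - (c + ⟪p, x - a⟫_ℝ)) Ω = Gm K v Ω := by
  have h_split : ∀ x b : Euc n, ⟪p, x - a⟫_ℝ = ⟪p, b - a⟫_ℝ + ⟪p, x - b⟫_ℝ := fun x b => by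
    rw [← inner_add_right]
    congr 1
    abel
  ext b
  refine and_congr_right fun _ => ⟨fun ⟨p', h⟩ => ⟨p' + p, fun x hx => ?_⟩,
    fun ⟨p', h⟩ => ⟨p' - p, fun x hx => ?_⟩⟩
  · have := h x hx
    rw [inner_add_left]
    linarith [h_split x b]
  · have := h x hx
    rw [inner_sub_left]
    linarith [h_split x b]

lemma mem_Gm_of_isMinOn_add_norm_sq {b : Euc n} (hb : b ∈ Ω)
    (hmin : IsMinOn (fun x => v x + K / 2 * ‖x‖ ^ 2) Ω b) : b ∈ Gm K v Ω := by
  refine ⟨hb, -K • b, fun x hx => ?_⟩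
  have h_le : v b + K / 2 * ‖b‖ ^ 2 ≤ v x + K / 2 * ‖x‖ ^ 2 := hmin hx
  have h_sq : ‖x‖ ^ 2 = ‖b‖ ^ 2 + 2 * ⟪b, x - b⟫_ℝ + ‖x - b‖ ^ 2 := by
    rw [← norm_add_sq_real, add_sub_cancel]
  rw [real_inner_smul_left]
  rw [h_sq] at h_le
  linarith

lemma nonempty_Gm_inter_ball_of_lt (hs : closedBall 0 s ⊆ Ω) (hv : ContinuousOn v (closedBall 0 s))
    {a : Euc n} (ha : a ∈ closedBall 0 s)
    (hfar : ∀ x ∈ Ω, s ≤ ‖x‖ → v a + K / 2 * ‖a‖ ^ 2 < v x + K / 2 * ‖x‖ ^ 2) :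
    (Gm K v Ω ∩ ball 0 s).Nonempty := by
  obtain ⟨b, hb, hmin⟩ := (isCompact_closedBall (0 : Euc n) s).exists_isMinOn ⟨a, ha⟩
    (f := fun x => v x + K / 2 * ‖x‖ ^ 2) (by fun_prop)
  have hba : v b + K / 2 * ‖b‖ ^ 2 ≤ v a + K / 2 * ‖a‖ ^ 2 := hmin ha
  refine ⟨b, mem_Gm_of_isMinOn_add_norm_sq (hs hb) fun x hx => ?_, ?_⟩
  · rcases le_total s ‖x‖ with hsx | hxs
    · exact hba.trans (hfar x hx hsx).le
    · exact hmin (mem_closedBall_zero_iff.2 hxs)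
  · rw [mem_ball_zero_iff]
    by_contra! hsb
    exact (hfar b (hs hb) hsb).not_ge hba

end TouchingParaboloids

section Localization

variable {n : ℕ} {lam Lam ρ r q : ℝ} {Ω : Set (Euc n)} {v : Euc n → ℝ}

lemma norm_sub_sq_le_of_norm_le {E : Type*} [SeminormedAddCommGroup E] {x a : E} {t : ℝ}
    (ha : ‖a‖ ≤ t) : ‖x - a‖ ^ 2 ≤ 2 * (‖x‖ ^ 2 + t ^ 2) :=
  calc ‖x - a‖ ^ 2 ≤ (‖x‖ + ‖a‖) ^ 2 := by gcongr; exact norm_sub_le x a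
    _ ≤ 2 * (‖x‖ ^ 2 + ‖a‖ ^ 2) := add_sq_le
    _ ≤ 2 * (‖x‖ ^ 2 + t ^ 2) := by gcongr

-- The opening `K = 32 C / (3 r²)` makes `K |x|² / 2` at most `16 C / 3` on the ball of radius `r`,
-- but at least `27 C` outside the ball of radius `9 r / 4`.
lemma add_norm_sq_lt_of_neg_paraboloid_le {E : Type*} [SeminormedAddCommGroup E] {x y a : E}
    {C α β : ℝ} (hr : 0 < r) (hrρ : r ≤ ρ) (hC : 1 ≤ C) (ha : ‖a‖ ≤ 3 / 4 * ρ)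
    (hx : ‖x‖ ≤ r) (hα : α ≤ 3 * C) (hy : 9 / 4 * r ≤ ‖y‖)
    (hβ : -(1 / (2 * ρ ^ 2) / 2 * ‖y - a‖ ^ 2) ≤ β) :
    α + 32 / 3 * C / r ^ 2 / 2 * ‖x‖ ^ 2 < β + 32 / 3 * C / r ^ 2 / 2 * ‖y‖ ^ 2 := by
  have hρ : 0 < ρ := hr.trans_le hrρ
  set t := ‖y‖ ^ 2 / r ^ 2 with ht
  have ht_lower : 81 / 16 ≤ t := by
    rw [ht, le_div_iff₀ (by positivity)]
    calc 81 / 16 * r ^ 2 = (9 / 4 * r) ^ 2 := by ring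
      _ ≤ ‖y‖ ^ 2 := by gcongr
  have hβ_lower : -(t / 2 + 9 / 32) ≤ β := by
    refine le_trans (neg_le_neg ?_) hβ
    calc 1 / (2 * ρ ^ 2) / 2 * ‖y - a‖ ^ 2
        ≤ 1 / (2 * ρ ^ 2) / 2 * (2 * (‖y‖ ^ 2 + (3 / 4 * ρ) ^ 2)) := by
          gcongr
          exact norm_sub_sq_le_of_norm_le ha
      _ = ‖y‖ ^ 2 / ρ ^ 2 / 2 + 9 / 32 := by field_simp; ring
      _ ≤ t / 2 + 9 / 32 := by rw [ht]; gcongr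
  calc α + 32 / 3 * C / r ^ 2 / 2 * ‖x‖ ^ 2
      ≤ 3 * C + 32 / 3 * C / r ^ 2 / 2 * r ^ 2 := by gcongr
    _ = 25 / 3 * C := by field_simp; ring
    _ < -(t / 2 + 9 / 32) + 16 / 3 * C * t := by nlinarith
    _ ≤ β + 16 / 3 * C * t := by gcongr
    _ = β + 32 / 3 * C / r ^ 2 / 2 * ‖y‖ ^ 2 := by rw [ht]; ring

theorem ViscSupersol.nonempty_Gm_inter_ball (hn : 0 < n) (hlam : 0 < lam) (hLam : lam ≤ Lam)
    (hq₁ : 1 ≤ q) (hq : (n - 1) * Lam ≤ (q + 1) * lam) (hr : 0 < r) (hrρ : 9 / 4 * r ≤ ρ)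
    (hB : closedBall 0 ρ ⊆ Ω) (hv : ContinuousOn v (closedBall 0 ρ))
    (hsuper : ViscSupersol lam Lam (ball 0 ρ) v)
    (hne : (Gm (1 / (2 * ρ ^ 2)) v Ω ∩ closedBall 0 (3 / 4 * ρ)).Nonempty) :
    (Gm (32 / 3 * (ρ / r) ^ q / r ^ 2) v Ω ∩ ball 0 (9 / 4 * r)).Nonempty := by
  obtain ⟨a, ⟨-, p, hp⟩, ha⟩ := hne
  rw [mem_closedBall_zero_iff] at ha
  have hρ : 0 < ρ := by linarith
  set u : Euc n → ℝ := fun x => v x - (v a + ⟪p, x - a⟫_ℝ)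
  have hu : ContinuousOn u (closedBall 0 ρ) := by fun_prop
  have hu_lower : ∀ x ∈ Ω, -(1 / (2 * ρ ^ 2) / 2 * ‖x - a‖ ^ 2) ≤ u x := fun x hx => by
    linarith [hp x hx]
  have hu_sphere : ∀ x ∈ sphere 0 ρ, -(7 / 8) ≤ u x := fun x hx => by
    refine le_trans (neg_le_neg ?_) (hu_lower x (hB (sphere_subset_closedBall hx)))
    calc 1 / (2 * ρ ^ 2) / 2 * ‖x - a‖ ^ 2
        ≤ 1 / (2 * ρ ^ 2) / 2 * (2 * (ρ ^ 2 + (3 / 4 * ρ) ^ 2)) := by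
          gcongr
          simpa only [mem_sphere_zero_iff_norm.1 hx] using norm_sub_sq_le_of_norm_le (x := x) ha
      _ ≤ 7 / 8 := by field_simp; norm_num
  obtain ⟨x, hx, hux⟩ := (hsuper.sub_affine (v a) p a).exists_mem_closedBall_le hn hlam hLam hq₁ hq
    hr hu hu_sphere ha (by simp)
  rw [← Gm_sub_affine _ v Ω (v a) p a]
  have hsub : closedBall (0 : Euc n) (9 / 4 * r) ⊆ closedBall 0 ρ :=
    closedBall_subset_closedBall hrρ
  refine nonempty_Gm_inter_ball_of_lt (hsub.trans hB) (hu.mono hsub)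
    (closedBall_subset_closedBall (by linarith) hx) fun y hy hy_far => ?_
  have h_one : 1 ≤ (ρ / r) ^ q :=
    Real.one_le_rpow ((one_le_div hr).2 (by linarith)) (by linarith)
  exact add_norm_sq_lt_of_neg_paraboloid_le hr (by linarith) h_one ha
    (mem_closedBall_zero_iff.1 hx) hux hy_far (hu_lower y hy)

end Localization

section Cubes

variable {n : ℕ}

lemma ball_subset_cube (r : ℝ) (x : Euc n) : ball x (r / 2) ⊆ cube r x := fun y hy i =>
  (PiLp.norm_apply_le (y - x) i).trans_lt (mem_ball_iff_norm.1 hy)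

lemma cube_subset_closedBall {r : ℝ} (hr : 0 ≤ r) (x : Euc n) :
    cube r x ⊆ closedBall x (r / 2 * √n) := fun y hy => by
  rw [mem_closedBall, EuclideanSpace.dist_eq]
  refine Real.sqrt_le_iff.2 ⟨by positivity, ?_⟩
  calc ∑ i, dist (y i) (x i) ^ 2 ≤ ∑ _i : Fin n, (r / 2) ^ 2 := by
        gcongr with i
        exact (hy i).le
    _ = (r / 2 * √n) ^ 2 := by
        rw [mul_pow, Real.sq_sqrt n.cast_nonneg]
        simp [mul_comm]

end Cubes

theorem stmt_8_general {n : ℕ} (hn : 0 < n) {lam Lam : ℝ} (hlam : 0 < lam) (hLam : lam ≤ Lam)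
    {Ω : Set (Euc n)} (hB : closedBall 0 (2 * √n) ⊆ Ω) {v : Euc n → ℝ}
    (hv : ContinuousOn v (closedBall 0 (2 * √n)))
    (hsuper : ViscSupersol lam Lam (ball 0 (2 * √n)) v)
    (hne : (Gm (1 / (8 * n)) v Ω ∩ cube 3 0).Nonempty) :
    (Gm (432 * n * (8 * (36 * n) ^ max (1 : ℝ) ((n - 1) * Lam / lam - 1))) v Ω
      ∩ cube (1 / (4 * √n)) 0).Nonempty := by
  have hn₁ : (1 : ℝ) ≤ n := by exact_mod_cast hn
  have h_sq : √(n : ℝ) ^ 2 = n := Real.sq_sqrt n.cast_nonneg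
  set q := max (1 : ℝ) ((n - 1) * Lam / lam - 1)
  have hq : ((n : ℝ) - 1) * Lam ≤ (q + 1) * lam := by
    rw [← div_le_iff₀ hlam, ← sub_le_iff_le_add]
    exact le_max_right _ _
  have h_ratio : 2 * √(n : ℝ) / (1 / (18 * √n)) = 36 * n := by field_simp; rw [h_sq]; ring
  have h_opening : 32 / 3 * (36 * (n : ℝ)) ^ q / (1 / (18 * √n)) ^ 2
      = 432 * n * (8 * (36 * n) ^ q) := by
    field_simp; rw [h_sq]; ring
  have h_touching : 1 / (2 * (2 * √(n : ℝ)) ^ 2) = 1 / (8 * n) := by rw [mul_pow, h_sq]; ring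
  have h_outer : cube 3 (0 : Euc n) ⊆ closedBall 0 (3 / 4 * (2 * √n)) :=
    (cube_subset_closedBall (by norm_num) 0).trans_eq (by ring_nf)
  have h_inner : ball (0 : Euc n) (9 / 4 * (1 / (18 * √n))) ⊆ cube (1 / (4 * √n)) 0 := by
    convert ball_subset_cube (1 / (4 * √(n : ℝ))) (0 : Euc n) using 2
    field_simp
    norm_num
  have h_radii : 9 / 4 * (1 / (18 * √(n : ℝ))) ≤ 2 * √n := by
    field_simp
    linarith
  rw [← h_opening, ← h_ratio]
  rw [← h_touching] at hne
  exact (hsuper.nonempty_Gm_inter_ball hn hlam hLam (le_max_left _ _) hq (by positivity) h_radii hB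
    hv (hne.mono (Set.inter_subset_inter_right _ h_outer))).mono
      (Set.inter_subset_inter_right _ h_inner)

/-- localization lemma, part (ii): touching in Q₃ with opening 1/(8n)
implies touching in Q_{1/(4√n)} with opening M₂ = 432·n·M₁. -/
theorem stmt_8 (n : ℕ) (hn : 2 ≤ n) (lam Lam : ℝ) (hlam : 0 < lam) (hLam : lam ≤ Lam)
    (Ω : Set (Euc n)) (hΩ : IsOpen Ω) (hB : closedBall 0 (2 * Real.sqrt n) ⊆ Ω)
    (v : Euc n → ℝ) (hv : ContinuousOn v Ω) (hsuper : ViscSupersol lam Lam Ω v)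
    (hne : (Gm (1 / (8 * n)) v Ω ∩ cube 3 0).Nonempty) :
    (Gm (432 * (n : ℝ) * (8 * (36 * (n : ℝ)) ^ (max (1 : ℝ) (((n : ℝ) - 1) * Lam / lam - 1))))
        v Ω ∩ cube (1 / (4 * Real.sqrt n)) 0).Nonempty :=
  stmt_8_general (by omega) hlam hLam hB (hv.mono hB)
    (hsuper.mono_of_isOpen isOpen_ball (ball_subset_closedBall.trans hB)) hne
end
end

section
/- Let n ≥ 2 be an integer and 0 < λ ≤ Λ real constants. Set σ := 1 − (λ/(λ+(n−1)Λ))^n · (1/(4√n))^n and M := 884736·n³·(36n)^{max{1, (n−1)Λ/λ − 1}}. Let Ω ⊆ ℝⁿ be an open set containing the closed ball of radius 2√n centered at 0, and let v : Ω → ℝ be a continuous viscosity supersolution of M⁻_{λ,Λ}(D²v) ≤ 0 in Ω with |v| ≤ 1/4 on Ω. Then for every integer k ≥ 0, |A⁻_{M^k}(v,Ω) ∩ Q₁| ≤ σ^k. -/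
open MeasureTheory Metric
open scoped InnerProductSpace ENNReal

noncomputable section

/-!
Write `β = (n - 1) Λ / λ`. If `v` is touched from below at points `X y` by concave paraboloids of
opening `K` with vertices `y` ranging over a convex set, then `‖y₂ - y₁‖ ≤ (1 + β) ‖X y₂ - X y₁‖`.
Indeed, along the segment `[y₁, y₂]` the Legendre transform of `v + K/2 ‖·‖²` is convex, and if its
slope grew too little, it would be touched from above by a parabola of small opening; dually, `v`
would be touched from below by a function with Hessian `P (y₂ - y₁) ⊗ (y₂ - y₁) - K`, with `P` too
large for a supersolution. Hence `Gm K v Ω` has at least `(1 + β)⁻ⁿ` times the volume of the set of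
vertices. Taking the vertices in a subcube of side `r / (4 √n)` gives the fraction `1 - σ` of a cube
of side `r`, once the contact points are known to stay in that cube.

For the unit cube this follows from `|v| ≤ 1/4`. For a small cube with a point of `Gm K v Ω` nearby,
comparison with the barrier `|x| ^ (-β)` produces a point close to the center at which `v` is not
much larger than the touching paraboloid, so the contact points stay in the cube for the opening
`M K`. A Calderón–Zygmund decomposition of the open set `Am K v Ω` into dyadic cubes then gives
`|Am (M K) v Ω ∩ Q₁| ≤ σ |Am K v Ω ∩ Q₁|`.
-/

section

open scoped Matrix Topology

variable {n : ℕ} {lam Lam : ℝ} {Ω : Set (Euc n)} {v : Euc n → ℝ}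

/-- The ratio `(n - 1) Λ / λ`, called `β` in comments: the exponent for which `|x| ^ (-β)` is a
barrier for the Pucci operator. -/
def ellipticityRatio (n : ℕ) (lam Lam : ℝ) : ℝ := ((n : ℝ) - 1) * Lam / lam

theorem ellipticityRatio_nonneg (hn : 1 ≤ n) (hlam : 0 < lam) (hLam : lam ≤ Lam) :
    0 ≤ ellipticityRatio n lam Lam := by
  have : (1 : ℝ) ≤ n := by exact_mod_cast hn
  exact div_nonneg (mul_nonneg (by linarith) (by linarith)) hlam.le

theorem one_le_ellipticityRatio (hn : 2 ≤ n) (hlam : 0 < lam) (hLam : lam ≤ Lam) :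
    1 ≤ ellipticityRatio n lam Lam := by
  have : (2 : ℝ) ≤ n := by exact_mod_cast hn
  rw [ellipticityRatio, le_div_iff₀ hlam]
  nlinarith

/-! ### The Pucci operator on rank-one perturbations of multiples of the identity -/

theorem dotProduct_mulVec_le_trace_mul {ι : Type*} [Fintype ι] {B : Matrix ι ι ℝ}
    (hB : B.PosSemidef) (a : ι → ℝ) : a ⬝ᵥ B *ᵥ a ≤ B.trace * (a ⬝ᵥ a) := by
  classical
  obtain ⟨C, rfl⟩ : ∃ C : Matrix ι ι ℝ, B = Cᵀ * C := by
    open scoped MatrixOrder in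
    exact CStarAlgebra.nonneg_iff_eq_star_mul_self.mp hB.nonneg
  have trace_eq : (Cᵀ * C).trace = ∑ i, ∑ j, C i j ^ 2 := by
    rw [Matrix.trace_mul_comm]
    simp only [Matrix.trace, Matrix.diag, Matrix.mul_apply, Matrix.transpose_apply, sq]
  rw [← Matrix.mulVec_mulVec, Matrix.dotProduct_mulVec, Matrix.vecMul_transpose, trace_eq,
    Finset.sum_mul]
  refine Finset.sum_le_sum fun i _ => ?_
  simpa only [Matrix.mulVec, dotProduct, sq] using
    Finset.sum_mul_sq_le_sq_mul_sq Finset.univ (C i) a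

theorem trace_mul_smul_vecMulVec_sub {ι R : Type*} [Fintype ι] [DecidableEq ι] [CommRing R]
    (A : Matrix ι ι R) (a : ι → R) (P q : R) :
    (A * (P • Matrix.vecMulVec a a - q • (1 : Matrix ι ι R))).trace =
      P * (a ⬝ᵥ A *ᵥ a) - q * A.trace := by
  simp [mul_sub, Matrix.trace_sub, Matrix.mul_vecMulVec, Matrix.trace_vecMulVec,
    dotProduct_comm]

theorem le_pucciInf_smul_vecMulVec_sub (hlam : 0 < lam) (hLam : lam ≤ Lam) {a : Fin n → ℝ}
    {P q : ℝ} (ha : 0 < a ⬝ᵥ a) (hq : 0 ≤ q) (hqP : q ≤ P * (a ⬝ᵥ a)) :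
    lam * (P * (a ⬝ᵥ a) - (1 + ellipticityRatio n lam Lam) * q) ≤
      pucciInf lam Lam (P • Matrix.vecMulVec a a - q • (1 : Matrix (Fin n) (Fin n) ℝ)) := by
  refine le_csInf ⟨_, lam • 1, by simp [Matrix.IsSymm], by simp [matLE, Matrix.PosSemidef.zero],
    ?_, rfl⟩ ?_
  · rw [matLE, ← sub_smul]
    exact Matrix.PosSemidef.one.smul (sub_nonneg.2 hLam)
  rintro t ⟨A, -, hlamA, hALam, rfl⟩
  rw [trace_mul_smul_vecMulVec_sub]
  have trace_le := dotProduct_mulVec_le_trace_mul hALam a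
  have quad_ge := hlamA.dotProduct_mulVec_nonneg a
  simp only [Matrix.sub_mulVec, Matrix.smul_mulVec, Matrix.one_mulVec, dotProduct_sub,
    dotProduct_smul, Matrix.trace_sub, Matrix.trace_smul, Matrix.trace_one, Fintype.card_fin,
    smul_eq_mul, star_trivial] at trace_le quad_ge
  -- `μ` is the Rayleigh quotient of `A` at `a`; the other eigenvalues are at most `Λ`.
  obtain ⟨μ, hμ⟩ : ∃ μ, a ⬝ᵥ A *ᵥ a = μ * (a ⬝ᵥ a) := ⟨_, (div_mul_cancel₀ _ ha.ne').symm⟩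
  rw [hμ] at trace_le quad_ge ⊢
  have hμ_ge : lam ≤ μ := le_of_mul_le_mul_right (sub_nonneg.1 quad_ge) ha
  have htrace : A.trace ≤ (n - 1) * Lam + μ :=
    le_of_mul_le_mul_right (by linarith) ha
  have hβ : lam * ellipticityRatio n lam Lam = (n - 1) * Lam := mul_div_cancel₀ _ hlam.ne'
  calc lam * (P * (a ⬝ᵥ a) - (1 + ellipticityRatio n lam Lam) * q)
      = lam * (P * (a ⬝ᵥ a) - q) - q * (lam * ellipticityRatio n lam Lam) := by ring
    _ ≤ μ * (P * (a ⬝ᵥ a) - q) - q * ((n - 1) * Lam) := by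
        rw [hβ]; gcongr
    _ = P * (μ * (a ⬝ᵥ a)) - q * ((n - 1) * Lam + μ) := by ring
    _ ≤ P * (μ * (a ⬝ᵥ a)) - q * A.trace := by gcongr

/-! ### Hessian matrices of the test functions -/

theorem hessianMatrix_eq_of_hasGradientAt {φ : Euc n → ℝ} {G : Euc n → Euc n} {x₀ : Euc n}
    {H : Euc n →L[ℝ] Euc n} (hφ : ∀ᶠ x in 𝓝 x₀, HasGradientAt φ (G x) x)
    (hG : HasFDerivAt G H x₀) :
    hessianMatrix φ x₀ = Matrix.of fun i j =>
      ⟪H (EuclideanSpace.single i 1), EuclideanSpace.single j 1⟫_ℝ := by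
  have fderiv_eq : fderiv ℝ φ =ᶠ[𝓝 x₀] fun x => innerSL ℝ (G x) :=
    hφ.mono fun x hx => hx.hasFDerivAt.fderiv
  have fderiv₂_eq : HasFDerivAt (fun x => innerSL ℝ (G x)) ((innerSL ℝ).comp H) x₀ :=
    (innerSL ℝ : Euc n →L[ℝ] Euc n →L[ℝ] ℝ).hasFDerivAt.comp x₀ hG
  ext i j
  simp [hessianMatrix, iteratedFDeriv_two_apply, fderiv_eq.fderiv_eq, fderiv₂_eq.fderiv]

theorem hessianMatrix_add {φ ψ : Euc n → ℝ} {x₀ : Euc n} (hφ : ContDiffAt ℝ 2 φ x₀)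
    (hψ : ContDiffAt ℝ 2 ψ x₀) :
    hessianMatrix (fun x => φ x + ψ x) x₀ = hessianMatrix φ x₀ + hessianMatrix ψ x₀ := by
  ext i j
  simp [hessianMatrix, fun_iteratedFDeriv_add_apply hφ hψ]

theorem hasFDerivAt_inner_sub (d x₀ x : Euc n) :
    HasFDerivAt (fun x => ⟪d, x - x₀⟫_ℝ) (innerSL ℝ d) x :=
  (innerSL ℝ d).hasFDerivAt.comp x ((hasFDerivAt_id x).sub_const x₀)

theorem hasGradientAt_inner_right (p x : Euc n) : HasGradientAt (fun x => ⟪p, x⟫_ℝ) p x :=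
  hasGradientAt_iff_hasFDerivAt.2 (innerSL ℝ p).hasFDerivAt

theorem hasGradientAt_mul_inner_sq (P : ℝ) (d x₀ x : Euc n) :
    HasGradientAt (fun x => P / 2 * ⟪d, x - x₀⟫_ℝ ^ 2) ((P * ⟪d, x - x₀⟫_ℝ) • d) x := by
  refine hasGradientAt_iff_hasFDerivAt.2
    ((((hasFDerivAt_inner_sub d x₀ x).pow 2).const_mul (P / 2)).congr_fderiv ?_)
  ext w
  simp
  ring

theorem hasGradientAt_mul_norm_sub_sq (K : ℝ) (z x : Euc n) :
    HasGradientAt (fun x => K / 2 * ‖x - z‖ ^ 2) (K • (x - z)) x := by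
  refine hasGradientAt_iff_hasFDerivAt.2
    ((((hasFDerivAt_id x).sub_const z).norm_sq.const_mul (K / 2)).congr_fderiv ?_)
  ext w
  simp
  ring

theorem hessianMatrix_inner_right (p x₀ : Euc n) :
    hessianMatrix (fun x => ⟪p, x⟫_ℝ) x₀ = 0 := by
  rw [hessianMatrix_eq_of_hasGradientAt (.of_forall (hasGradientAt_inner_right p))
    (hasFDerivAt_const p x₀)]
  ext i j
  simp

theorem hessianMatrix_mul_inner_sq (P : ℝ) (d x₀ x : Euc n) :
    hessianMatrix (fun x => P / 2 * ⟪d, x - x₀⟫_ℝ ^ 2) x = P • Matrix.vecMulVec d d := by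
  rw [hessianMatrix_eq_of_hasGradientAt (.of_forall (hasGradientAt_mul_inner_sq P d x₀))
    (((hasFDerivAt_inner_sub d x₀ x).const_mul P).smul_const d)]
  ext i j
  simp [Matrix.vecMulVec_apply, inner_smul_left, EuclideanSpace.inner_single_right, mul_assoc]

theorem hessianMatrix_mul_norm_sub_sq (K : ℝ) (z x : Euc n) :
    hessianMatrix (fun x => K / 2 * ‖x - z‖ ^ 2) x = K • 1 := by
  rw [hessianMatrix_eq_of_hasGradientAt (.of_forall (hasGradientAt_mul_norm_sub_sq K z))
    (((hasFDerivAt_id x).sub_const z).const_smul K)]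
  ext i j
  simp [inner_smul_left, EuclideanSpace.inner_single_right, Matrix.one_apply, eq_comm]

theorem contDiff_mul_norm_sub_sq (K : ℝ) (z : Euc n) :
    ContDiff ℝ 2 fun x : Euc n => K / 2 * ‖x - z‖ ^ 2 :=
  contDiff_const.mul ((contDiff_id.sub contDiff_const).norm_sq ℝ)

theorem hessianMatrix_sub_mul_norm_sub_sq {ψ : Euc n → ℝ} {x₀ : Euc n}
    (hψ : ContDiffAt ℝ 2 ψ x₀) (K : ℝ) (z : Euc n) :
    hessianMatrix (fun x => ψ x - K / 2 * ‖x - z‖ ^ 2) x₀ = hessianMatrix ψ x₀ - K • 1 := by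
  have h := hessianMatrix_add hψ (contDiff_mul_norm_sub_sq (-K) z).contDiffAt
  rw [hessianMatrix_mul_norm_sub_sq, neg_smul, ← sub_eq_add_neg] at h
  rw [← h]
  congr 1 with x
  ring

theorem hasGradientAt_mul_norm_sub_sq_rpow (A g : ℝ) {c x : Euc n} (hx : x ≠ c) :
    HasGradientAt (fun x => A * (‖x - c‖ ^ 2) ^ g)
      ((2 * A * g * (‖x - c‖ ^ 2) ^ (g - 1)) • (x - c)) x := by
  have hpos : ‖x - c‖ ^ 2 ≠ 0 := pow_ne_zero 2 (norm_ne_zero_iff.2 (sub_ne_zero.2 hx))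
  refine hasGradientAt_iff_hasFDerivAt.2 (((((hasFDerivAt_id x).sub_const c).norm_sq.rpow_const
    (p := g) (.inl hpos)).const_mul A).congr_fderiv ?_)
  ext w
  simp
  ring

theorem hessianMatrix_mul_norm_sub_sq_rpow (A g : ℝ) {c x : Euc n} (hx : x ≠ c) :
    hessianMatrix (fun x => A * (‖x - c‖ ^ 2) ^ g) x =
      (4 * A * g * (g - 1) * (‖x - c‖ ^ 2) ^ (g - 2)) • Matrix.vecMulVec (x - c) (x - c) +
        (2 * A * g * (‖x - c‖ ^ 2) ^ (g - 1)) • 1 := by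
  have hpos : ‖x - c‖ ^ 2 ≠ 0 := pow_ne_zero 2 (norm_ne_zero_iff.2 (sub_ne_zero.2 hx))
  have hgrad : ∀ᶠ y in 𝓝 x, HasGradientAt (fun x => A * (‖x - c‖ ^ 2) ^ g)
      ((2 * A * g * (‖y - c‖ ^ 2) ^ (g - 1)) • (y - c)) y :=
    (eventually_ne_nhds hx).mono fun y hy => hasGradientAt_mul_norm_sub_sq_rpow A g hy
  rw [hessianMatrix_eq_of_hasGradientAt hgrad
    (((((hasFDerivAt_id x).sub_const c).norm_sq.rpow_const (p := g - 1) (.inl hpos)).const_mul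
      (2 * A * g)).smul ((hasFDerivAt_id x).sub_const c))]
  have hexp : g - 1 - 1 = g - 2 := by ring
  ext i j
  simp only [Matrix.of_apply, Matrix.add_apply, Matrix.smul_apply, Matrix.vecMulVec_apply,
    Matrix.one_apply, EuclideanSpace.inner_single_right, add_apply, smul_apply,
    ContinuousLinearMap.smulRight_apply, ContinuousLinearMap.comp_apply, innerSL_apply_apply,
    ContinuousLinearMap.id_apply, PiLp.add_apply, PiLp.smul_apply, PiLp.sub_apply,
    PiLp.single_apply, smul_eq_mul, nsmul_eq_mul, conj_trivial, id, eq_comm (a := j), hexp]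
  push_cast
  ring

/-! ### Viscosity supersolutions -/

theorem ViscSupersol.not_isLocalMinOn (hlam : 0 < lam) (hLam : lam ≤ Lam)
    (hsuper : ViscSupersol lam Lam Ω v) {x₀ a z : Euc n} (hx₀ : x₀ ∈ Ω) (ha : a ≠ 0)
    {ψ : Euc n → ℝ} (hψ : ContDiffAt ℝ 2 ψ x₀) {P K s : ℝ}
    (hess : hessianMatrix ψ x₀ = P • Matrix.vecMulVec a a + s • 1) (hs : s ≤ K)
    (hK : (1 + ellipticityRatio n lam Lam) * (K - s) < P * ‖a‖ ^ 2) :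
    ¬ IsLocalMinOn (fun x => v x - (ψ x - K / 2 * ‖x - z‖ ^ 2)) Ω x₀ := by
  intro hmin
  have hn : 1 ≤ n := Nat.one_le_iff_ne_zero.2 (by rintro rfl; exact ha (Subsingleton.elim a 0))
  have hβ := ellipticityRatio_nonneg hn hlam hLam
  have hφ : ContDiffAt ℝ 2 (fun x => ψ x - K / 2 * ‖x - z‖ ^ 2) x₀ :=
    hψ.sub (contDiff_mul_norm_sub_sq K z).contDiffAt
  obtain ⟨U, hU, hφU⟩ := hφ.contDiffOn le_rfl (by simp)
  obtain ⟨W, hWU, hW, hx₀W⟩ := _root_.mem_nhds_iff.1 hU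
  have hess_φ : hessianMatrix (fun x => ψ x - K / 2 * ‖x - z‖ ^ 2) x₀ =
      P • Matrix.vecMulVec a a - (K - s) • 1 := by
    rw [hessianMatrix_sub_mul_norm_sub_sq hψ, hess, sub_smul]
    abel
  have dot_eq : a.ofLp ⬝ᵥ a.ofLp = ‖a‖ ^ 2 := by
    rw [EuclideanSpace.real_norm_sq_eq]
    simp only [dotProduct, sq]
  have hle := hsuper x₀ hx₀ _ ⟨W, hW, hx₀W, hφU.mono hWU⟩ hmin
  rw [hess_φ] at hle
  have hge := le_pucciInf_smul_vecMulVec_sub hlam hLam (a := a) (P := P) (q := K - s)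
    (by rw [dot_eq]; positivity) (sub_nonneg.2 hs)
    (by rw [dot_eq]; nlinarith)
  rw [dot_eq] at hge
  linarith [mul_pos hlam (sub_pos.2 hK)]

theorem ViscSupersol.sub_inner (hsuper : ViscSupersol lam Lam Ω v) (p : Euc n) :
    ViscSupersol lam Lam Ω fun x => v x - ⟪p, x⟫_ℝ := by
  rintro x₀ hx₀ φ ⟨U, hU, hx₀U, hφ⟩ hmin
  have hp : ContDiff ℝ 2 fun x : Euc n => ⟪p, x⟫_ℝ := contDiff_const.inner ℝ contDiff_id
  have hle := hsuper x₀ hx₀ (fun x => φ x + ⟪p, x⟫_ℝ) ⟨U, hU, hx₀U, hφ.add hp.contDiffOn⟩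
    (by simpa only [sub_add_eq_sub_sub, sub_right_comm] using hmin)
  rwa [hessianMatrix_add (hφ.contDiffAt (hU.mem_nhds hx₀U)) hp.contDiffAt,
    hessianMatrix_inner_right, add_zero] at hle

/-! ### Contact points with paraboloids -/

theorem continuousOn_Icc_of_forall_add_mul_sub_le {h B : ℝ → ℝ} {a b : ℝ} (hab : a ≤ b)
    (hB : ∀ s ∈ Set.Icc a b, ∀ t ∈ Set.Icc a b, h s + B s * (t - s) ≤ h t) :
    ContinuousOn h (Set.Icc a b) := by
  have mono : MonotoneOn B (Set.Icc a b) := by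
    intro s hs t ht hst
    rcases hst.eq_or_lt with rfl | hlt
    · exact le_rfl
    · nlinarith [hB s hs t ht, hB t ht s hs]
  have bound : ∀ s ∈ Set.Icc a b, |B s| ≤ max |B a| |B b| := fun s hs =>
    abs_le_max_abs_abs (mono (Set.left_mem_Icc.2 hab) hs hs.1)
      (mono hs (Set.right_mem_Icc.2 hab) hs.2)
  refine (LipschitzOnWith.of_le_add_mul (Real.toNNReal (max |B a| |B b|))
    fun s hs t ht => ?_).continuousOn
  rw [Real.coe_toNNReal _ ((abs_nonneg _).trans (le_max_left _ _))]
  have slope : -(B s * (t - s)) ≤ max |B a| |B b| * dist s t := by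
    rw [dist_comm, Real.dist_eq]
    refine (neg_le_abs _).trans ?_
    rw [abs_mul]
    exact mul_le_mul_of_nonneg_right (bound s hs) (abs_nonneg _)
  linarith [hB s hs t ht]

theorem eq_of_forall_le_parabola {h : ℝ → ℝ} {b₁ b₂ c t₀ : ℝ} {s : Set ℝ} (hs : s ∈ 𝓝 t₀)
    (lower : ∀ t ∈ s, h t₀ + b₁ * (t - t₀) ≤ h t)
    (upper : ∀ t ∈ s, h t ≤ h t₀ + b₂ * (t - t₀) + c / 2 * (t - t₀) ^ 2) : b₁ = b₂ := by
  have hmin : IsLocalMin (fun t => (b₂ - b₁) * (t - t₀) + c / 2 * (t - t₀) ^ 2) t₀ := by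
    filter_upwards [hs] with t ht
    linarith [lower t ht, upper t ht]
  have hderiv : HasDerivAt (fun t => (b₂ - b₁) * (t - t₀) + c / 2 * (t - t₀) ^ 2)
      (b₂ - b₁) t₀ := by
    have hid := (hasDerivAt_id t₀).sub_const t₀
    exact ((hid.const_mul (b₂ - b₁)).add ((hid.pow 2).const_mul (c / 2))).congr_deriv (by simp)
  exact (sub_eq_zero.1 (hmin.hasDerivAt_eq_zero hderiv)).symm

theorem exists_parabola_through_endpoints_lt {h : ℝ → ℝ} {b₀ b₁ c : ℝ}
    (h₀ : ∀ t ∈ Set.Icc (0 : ℝ) 1, h 0 + b₀ * t ≤ h t)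
    (h₁ : ∀ t ∈ Set.Icc (0 : ℝ) 1, h 1 + b₁ * (t - 1) ≤ h t) (hc : b₁ - b₀ < c) :
    ∃ t ∈ Set.Icc (0 : ℝ) 1, h 0 + (h 1 - h 0 - c / 2) * t + c / 2 * t ^ 2 < h t := by
  have slopes_le : b₀ ≤ b₁ := by linarith [h₀ 1 (by simp), h₁ 0 (by simp)]
  have hc₀ : 0 < c := by linarith
  by_contra! hle
  -- The subgradient bounds at `τ` and `1 - τ` add up to `c + b₀ - b₁ ≤ c * τ`.
  obtain ⟨τ, hτ⟩ : ∃ τ, c * τ = (c + b₀ - b₁) / 2 := ⟨_, mul_div_cancel₀ _ hc₀.ne'⟩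
  have τ_pos : 0 < τ := by nlinarith
  have τ_le : τ ≤ 1 := by nlinarith
  have mem : τ ∈ Set.Icc (0 : ℝ) 1 := ⟨τ_pos.le, τ_le⟩
  have mem' : 1 - τ ∈ Set.Icc (0 : ℝ) 1 := ⟨by linarith, by linarith⟩
  nlinarith [h₀ τ mem, h₁ (1 - τ) mem', hle τ mem, hle (1 - τ) mem']

theorem exists_parabola_touching_above {h B : ℝ → ℝ} {c : ℝ}
    (hB : ∀ s ∈ Set.Icc (0 : ℝ) 1, ∀ t ∈ Set.Icc (0 : ℝ) 1, h s + B s * (t - s) ≤ h t)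
    (hc : B 1 - B 0 < c) :
    ∃ t₀ ∈ Set.Ioo (0 : ℝ) 1, ∀ t ∈ Set.Icc (0 : ℝ) 1,
      h t ≤ h t₀ + B t₀ * (t - t₀) + c / 2 * (t - t₀) ^ 2 := by
  obtain ⟨m, hm⟩ : ∃ m, m = h 1 - h 0 - c / 2 := ⟨_, rfl⟩
  obtain ⟨t₁, ht₁, hlt⟩ := exists_parabola_through_endpoints_lt
    (by simpa using hB 0 (by simp)) (hB 1 (by simp)) hc
  rw [← hm] at hlt
  have hcont : ContinuousOn (fun t => h t - m * t - c / 2 * t ^ 2) (Set.Icc 0 1) := by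
    have := continuousOn_Icc_of_forall_add_mul_sub_le zero_le_one hB
    fun_prop
  obtain ⟨t₀, ht₀, hmax⟩ := isCompact_Icc.exists_isMaxOn ⟨t₁, ht₁⟩ hcont
  have ht₀' : t₀ ∈ Set.Ioo (0 : ℝ) 1 := by
    have hle : h t₁ - m * t₁ - c / 2 * t₁ ^ 2 ≤ h t₀ - m * t₀ - c / 2 * t₀ ^ 2 := hmax ht₁
    refine ⟨ht₀.1.lt_of_ne ?_, ht₀.2.lt_of_ne ?_⟩ <;> rintro rfl <;> linarith
  have touch : ∀ t ∈ Set.Icc (0 : ℝ) 1,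
      h t ≤ h t₀ + (m + c * t₀) * (t - t₀) + c / 2 * (t - t₀) ^ 2 := by
    intro t ht
    have hle : h t - m * t - c / 2 * t ^ 2 ≤ h t₀ - m * t₀ - c / 2 * t₀ ^ 2 := hmax ht
    linarith
  have slope_eq : B t₀ = m + c * t₀ :=
    eq_of_forall_le_parabola (Icc_mem_nhds ht₀'.1 ht₀'.2) (hB t₀ ht₀) touch
  exact ⟨t₀, ht₀', slope_eq ▸ touch⟩

/-- `X` assigns to every `y ∈ V` a point of `Ω` at which `v` is touched from below, relative to `Ω`,
by a paraboloid `const - K / 2 * ‖· - y‖ ^ 2` with vertex `y`. -/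
def IsContactMap (K : ℝ) (v : Euc n → ℝ) (Ω V : Set (Euc n)) (X : Euc n → Euc n) : Prop :=
  ∀ y ∈ V, X y ∈ Ω ∧ IsMinOn (fun z => v z + K / 2 * ‖z - y‖ ^ 2) Ω (X y)

namespace IsContactMap

variable {K : ℝ} {V : Set (Euc n)} {X : Euc n → Euc n} {y₁ y₂ : Euc n}

/- On the segment from `y₁` to `y₂`, the Legendre transform `y ↦ sup_z (K⟪z, y⟫ - v z - K/2 ‖z‖²)`
is attained at `z = X y` and has slope `K⟪X y, y₂ - y₁⟫`. It is `W t (X (Y t))` below. -/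
theorem exists_forall_add_mul_le (hX : IsContactMap K v Ω V X) (hV : Convex ℝ V) (hy₁ : y₁ ∈ V)
    (hy₂ : y₂ ∈ V) {c : ℝ} (hc : K * ⟪X y₂ - X y₁, y₂ - y₁⟫_ℝ < c) :
    ∃ y ∈ V, ∃ t₀ ∈ Set.Ioo (0 : ℝ) 1, ∀ t ∈ Set.Icc (0 : ℝ) 1, ∀ z ∈ Ω,
      v (X y) + K / 2 * ‖X y - y‖ ^ 2 + K * ⟪y₂ - y₁, z - X y⟫_ℝ * (t - t₀) -
        c / 2 * (t - t₀) ^ 2 ≤ v z + K / 2 * ‖z - y‖ ^ 2 := by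
  obtain ⟨Y, hY⟩ : ∃ Y : ℝ → Euc n, ∀ t, Y t = y₁ + t • (y₂ - y₁) := ⟨_, fun _ => rfl⟩
  have hYV : ∀ t ∈ Set.Icc (0 : ℝ) 1, Y t ∈ V := fun t ht => by
    rw [hY]
    exact hV.add_smul_sub_mem hy₁ hy₂ ht
  obtain ⟨W, hW⟩ : ∃ W : ℝ → Euc n → ℝ, ∀ t z,
    W t z = K / 2 * ‖Y t‖ ^ 2 - (v z + K / 2 * ‖z - Y t‖ ^ 2) := ⟨_, fun _ _ => rfl⟩
  have W_le : ∀ t ∈ Set.Icc (0 : ℝ) 1, ∀ z ∈ Ω, W t z ≤ W t (X (Y t)) := fun t ht z hz => by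
    rw [hW, hW]
    exact sub_le_sub_left ((hX _ (hYV t ht)).2 hz) _
  have W_affine : ∀ s t z, W t z = W s z + K * ⟪y₂ - y₁, z⟫_ℝ * (t - s) := fun s t z => by
    rw [hW, hW, norm_sub_sq_real, norm_sub_sq_real, hY, hY, inner_add_right, inner_add_right,
      inner_smul_right, inner_smul_right, real_inner_comm z]
    ring
  have hc' : K * ⟪y₂ - y₁, X (Y 1)⟫_ℝ - K * ⟪y₂ - y₁, X (Y 0)⟫_ℝ < c := by
    rw [← mul_sub, ← inner_sub_right, real_inner_comm]
    simpa [hY] using hc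
  obtain ⟨t₀, ht₀, touch⟩ := exists_parabola_touching_above
    (h := fun t => W t (X (Y t))) (B := fun t => K * ⟪y₂ - y₁, X (Y t)⟫_ℝ)
    (fun s hs t ht => W_affine s t (X (Y s)) ▸ W_le t ht _ (hX _ (hYV s hs)).1) hc'
  refine ⟨Y t₀, hYV t₀ (Set.Ioo_subset_Icc_self ht₀), t₀, ht₀, fun t ht z hz => ?_⟩
  have key := (W_le t ht z hz).trans (touch t ht)
  rw [W_affine t₀, hW, hW] at key
  rw [inner_sub_right]
  linarith

theorem exists_isLocalMinOn (hX : IsContactMap K v Ω V X) (hV : Convex ℝ V) (hy₁ : y₁ ∈ V)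
    (hy₂ : y₂ ∈ V) {c : ℝ} (hc₀ : 0 < c) (hc : K * ⟪X y₂ - X y₁, y₂ - y₁⟫_ℝ < c) :
    ∃ y ∈ V, IsLocalMinOn (fun z => v z -
      (K ^ 2 / c / 2 * ⟪y₂ - y₁, z - X y⟫_ℝ ^ 2 - K / 2 * ‖z - y‖ ^ 2)) Ω (X y) := by
  obtain ⟨y, hy, t₀, ht₀, touch⟩ := hX.exists_forall_add_mul_le hV hy₁ hy₂ hc
  refine ⟨y, hy, ?_⟩
  have near : ∀ᶠ z in 𝓝 (X y),
      t₀ + K * ⟪y₂ - y₁, z - X y⟫_ℝ / c ∈ Set.Icc (0 : ℝ) 1 := by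
    have : Continuous fun z => t₀ + K * ⟪y₂ - y₁, z - X y⟫_ℝ / c := by fun_prop
    exact this.continuousAt.eventually_mem (by simpa using Icc_mem_nhds ht₀.1 ht₀.2)
  filter_upwards [mem_nhdsWithin_of_mem_nhds near, self_mem_nhdsWithin] with z hz hzΩ
  have key := touch _ hz z hzΩ
  have square : ∀ δ : ℝ, K * δ * (K * δ / c) - c / 2 * (K * δ / c) ^ 2 =
      K ^ 2 / c / 2 * δ ^ 2 := fun δ => by
    field_simp
    ring
  rw [add_sub_cancel_left, add_sub_assoc, square] at key
  simp only [sub_self, inner_zero_right]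
  linarith

theorem norm_sub_le (hX : IsContactMap K v Ω V X) (hn : 1 ≤ n) (hlam : 0 < lam) (hLam : lam ≤ Lam)
    (hsuper : ViscSupersol lam Lam Ω v) (hK : 0 < K) (hV : Convex ℝ V) (hy₁ : y₁ ∈ V)
    (hy₂ : y₂ ∈ V) :
    ‖y₂ - y₁‖ ≤ (1 + ellipticityRatio n lam Lam) * ‖X y₂ - X y₁‖ := by
  by_contra! hlt
  have hβ := ellipticityRatio_nonneg hn hlam hLam
  have hd : 0 < ‖y₂ - y₁‖ := lt_of_le_of_lt (by positivity) hlt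
  obtain ⟨c, hc_gt, hc_lt⟩ : ∃ c, K * (‖X y₂ - X y₁‖ * ‖y₂ - y₁‖) < c ∧
      c < K * ‖y₂ - y₁‖ ^ 2 / (1 + ellipticityRatio n lam Lam) := by
    refine exists_between ?_
    rw [lt_div_iff₀ (by positivity)]
    nlinarith [mul_lt_mul_of_pos_left hlt (mul_pos hK hd)]
  have hc₀ : 0 < c := lt_of_le_of_lt (by positivity) hc_gt
  obtain ⟨y, hy, hmin⟩ := hX.exists_isLocalMinOn hV hy₁ hy₂ hc₀
    (lt_of_le_of_lt (by gcongr; exact real_inner_le_norm _ _) hc_gt)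
  have hψ : ContDiffAt ℝ 2 (fun z => K ^ 2 / c / 2 * ⟪y₂ - y₁, z - X y⟫_ℝ ^ 2) (X y) :=
    (contDiff_const.mul
      ((contDiff_const.inner ℝ (contDiff_id.sub contDiff_const)).pow 2)).contDiffAt
  refine hsuper.not_isLocalMinOn hlam hLam (hX y hy).1 (norm_pos_iff.1 hd) hψ (P := K ^ 2 / c)
    (s := 0) ?_ hK.le ?_ hmin
  · rw [hessianMatrix_mul_inner_sq, zero_smul, add_zero]
  · rw [lt_div_iff₀ (by positivity)] at hc_lt
    rw [div_mul_eq_mul_div, lt_div_iff₀ hc₀]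
    nlinarith [mul_lt_mul_of_pos_left hc_lt hK]

theorem mem_Gm (hX : IsContactMap K v Ω V X) {y : Euc n} (hy : y ∈ V) : X y ∈ Gm K v Ω := by
  obtain ⟨hXΩ, hmin⟩ := hX y hy
  refine ⟨hXΩ, K • (y - X y), fun z hz => ?_⟩
  have hle : v (X y) + K / 2 * ‖X y - y‖ ^ 2 ≤ v z + K / 2 * ‖z - y‖ ^ 2 := hmin hz
  have hsq : ‖z - y‖ ^ 2 = ‖z - X y‖ ^ 2 - 2 * ⟪y - X y, z - X y⟫_ℝ + ‖X y - y‖ ^ 2 := by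
    rw [← sub_sub_sub_cancel_right z y (X y), norm_sub_sq_real, real_inner_comm,
      norm_sub_rev y (X y)]
  rw [hsq] at hle
  rw [real_inner_smul_left]
  linarith

end IsContactMap

theorem addHaar_le_mul_addHaar_image {E : Type*} [NormedAddCommGroup E] [NormedSpace ℝ E]
    [FiniteDimensional ℝ E] [MeasurableSpace E] [BorelSpace E] (μ : Measure E)
    [μ.IsAddHaarMeasure] {f : E → E} {s : Set E} {L : NNReal}
    (hf : ∀ x ∈ s, ∀ y ∈ s, dist x y ≤ L * dist (f x) (f y)) :
    μ s ≤ L ^ Module.finrank ℝ E * μ (f '' s) := by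
  rw [Measure.isAddLeftInvariant_eq_smul μ (μH[Module.finrank ℝ E])]
  have anti : AntilipschitzWith L (s.domRestrict f) :=
    AntilipschitzWith.of_le_mul_dist fun x y => hf x x.2 y y.2
  have hle := anti.le_hausdorffMeasure_image (d := (Module.finrank ℝ E : ℝ)) (by positivity)
    Set.univ
  rw [← (isometry_subtype_coe (s := s)).hausdorffMeasure_image (.inl (by positivity)),
    Set.image_univ, Set.image_univ, Subtype.range_coe, Set.range_domRestrict,
    ENNReal.rpow_natCast] at hle
  simp only [Measure.smul_apply, ENNReal.smul_def, smul_eq_mul]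
  rw [mul_left_comm]
  gcongr

theorem IsContactMap.volume_le {K : ℝ} {V Q : Set (Euc n)} {X : Euc n → Euc n}
    (hX : IsContactMap K v Ω V X) (hn : 1 ≤ n) (hlam : 0 < lam) (hLam : lam ≤ Lam)
    (hsuper : ViscSupersol lam Lam Ω v) (hK : 0 < K) (hV : Convex ℝ V) (hXQ : Set.MapsTo X V Q) :
    volume V ≤ ENNReal.ofReal (1 + ellipticityRatio n lam Lam) ^ n *
      volume (Gm K v Ω ∩ Q) := by
  have hβ := ellipticityRatio_nonneg hn hlam hLam
  calc volume V
      ≤ ENNReal.ofReal (1 + ellipticityRatio n lam Lam) ^ n * volume (X '' V) := by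
        have := addHaar_le_mul_addHaar_image volume (f := X) (s := V)
          (L := Real.toNNReal (1 + ellipticityRatio n lam Lam)) fun y₂ hy₂ y₁ hy₁ => by
            rw [Real.coe_toNNReal _ (by positivity), dist_eq_norm, dist_eq_norm]
            exact hX.norm_sub_le hn hlam hLam hsuper hK hV hy₁ hy₂
        rwa [finrank_euclideanSpace, Fintype.card_fin] at this
    _ ≤ ENNReal.ofReal (1 + ellipticityRatio n lam Lam) ^ n * volume (Gm K v Ω ∩ Q) := by
        gcongr
        rintro _ ⟨y, hy, rfl⟩
        exact ⟨hX.mem_Gm hy, hXQ hy⟩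

/-! ### The sets `Gm` and `Am` -/

theorem Gm_mono {K K' : ℝ} (hK : K ≤ K') : Gm K v Ω ⊆ Gm K' v Ω := by
  rintro x ⟨hx, p, hp⟩
  refine ⟨hx, p, fun z hz => (hp z hz).trans' ?_⟩
  gcongr

theorem Am_anti {K K' : ℝ} (hK : K ≤ K') : Am K' v Ω ⊆ Am K v Ω :=
  Set.sdiff_subset_sdiff_right (Gm_mono hK)

theorem Gm_sub_inner (K : ℝ) (p : Euc n) : Gm K (fun x => v x - ⟪p, x⟫_ℝ) Ω = Gm K v Ω := by
  ext x
  simp only [Gm, Set.mem_ofPred_eq, and_congr_right_iff]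
  refine fun _ => (Equiv.subRight p).symm.exists_congr_left.trans (exists_congr fun q => ?_)
  refine forall₂_congr fun z _ => ?_
  simp only [Equiv.symm_symm, Equiv.subRight_apply, inner_sub_left, inner_sub_right]
  constructor <;> intro h <;> linarith

theorem Am_sub_inner (K : ℝ) (p : Euc n) : Am K (fun x => v x - ⟪p, x⟫_ℝ) Ω = Am K v Ω := by
  rw [Am, Gm_sub_inner, Am]

theorem norm_le_of_forall_add_inner_sub_le {K C δ : ℝ} {x p : Euc n} (hδ : 0 < δ)
    (hball : closedBall x δ ⊆ Ω) (hC : ∀ z ∈ closedBall x δ, |v z| ≤ C)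
    (hp : ∀ z ∈ Ω, v x + ⟪p, z - x⟫_ℝ - K / 2 * ‖z - x‖ ^ 2 ≤ v z) :
    ‖p‖ ≤ (2 * C + |K| / 2 * δ ^ 2) / δ := by
  have hx : x ∈ closedBall x δ := mem_closedBall_self hδ.le
  rcases eq_or_ne p 0 with rfl | hp₀
  · rw [norm_zero]
    have := (abs_nonneg _).trans (hC x hx)
    positivity
  have hpos : 0 < ‖p‖ := norm_pos_iff.2 hp₀
  have hnorm : ‖(δ / ‖p‖) • p‖ = δ := by
    rw [norm_smul, Real.norm_of_nonneg (by positivity), div_mul_cancel₀ _ hpos.ne']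
  have hz : x + (δ / ‖p‖) • p ∈ closedBall x δ := by
    rw [mem_closedBall, dist_eq_norm, add_sub_cancel_left, hnorm]
  have touch := hp _ (hball hz)
  have inner_eq : ⟪p, (δ / ‖p‖) • p⟫_ℝ = ‖p‖ * δ := by
    rw [inner_smul_right, real_inner_self_eq_norm_sq]
    field_simp
  rw [add_sub_cancel_left, hnorm, inner_eq] at touch
  rw [le_div_iff₀ hδ]
  have hKδ : K / 2 * δ ^ 2 ≤ |K| / 2 * δ ^ 2 := by gcongr; exact le_abs_self K
  linarith [(abs_le.1 (hC x hx)).1, (abs_le.1 (hC _ hz)).2]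

theorem isClosed_setOf_exists_slope {K b : ℝ} {B : Set (Euc n)} (hv : ContinuousOn v B)
    (hB : IsCompact B) :
    IsClosed {x | x ∈ B ∧ ∃ p ∈ closedBall (0 : Euc n) b,
      ∀ z ∈ Ω, v x + ⟪p, z - x⟫_ℝ - K / 2 * ‖z - x‖ ^ 2 ≤ v z} := by
  have hD : IsCompact (B ×ˢ closedBall (0 : Euc n) b) := hB.prod (isCompact_closedBall _ _)
  have hcont : ∀ z, ContinuousOn
      (fun q : Euc n × Euc n => v q.1 + ⟪q.2, z - q.1⟫_ℝ - K / 2 * ‖z - q.1‖ ^ 2)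
      (B ×ˢ closedBall (0 : Euc n) b) := fun z => by
    have : ContinuousOn (fun q : Euc n × Euc n => v q.1) (B ×ˢ closedBall (0 : Euc n) b) :=
      hv.comp continuousOn_fst fun q hq => hq.1
    exact (this.add (by fun_prop)).sub (by fun_prop)
  have hS : IsCompact ((B ×ˢ closedBall (0 : Euc n) b) ∩ ⋂ z ∈ Ω,
      {q | q ∈ B ×ˢ closedBall (0 : Euc n) b ∧
        v q.1 + ⟪q.2, z - q.1⟫_ℝ - K / 2 * ‖z - q.1‖ ^ 2 ≤ v z}) :=
    hD.inter_right <| isClosed_biInter fun z _ =>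
      hD.isClosed.isClosed_le (hcont z) continuousOn_const
  convert (hS.image continuous_fst).isClosed using 1
  ext x
  simp only [Set.mem_image, Set.mem_inter_iff, Set.mem_iInter₂, Prod.exists, exists_and_right,
    exists_eq_right, Set.mem_ofPred_eq, Set.mem_prod]
  constructor
  · rintro ⟨hx, p, hp, touch⟩
    exact ⟨p, ⟨hx, hp⟩, fun z hz => ⟨⟨hx, hp⟩, touch z hz⟩⟩
  · rintro ⟨p, ⟨hx, hp⟩, touch⟩
    exact ⟨hx, p, hp, fun z hz => (touch z hz).2⟩

theorem isOpen_Am (hΩ : IsOpen Ω) (hv : ContinuousOn v Ω) (K : ℝ) : IsOpen (Am K v Ω) := by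
  refine isOpen_iff_mem_nhds.2 fun x₀ hx₀ => ?_
  obtain ⟨δ, hδ, hball⟩ : ∃ δ > 0, closedBall x₀ (2 * δ) ⊆ Ω := by
    obtain ⟨ε, hε, h⟩ := nhds_basis_closedBall.mem_iff.1 (hΩ.mem_nhds hx₀.1)
    exact ⟨ε / 2, half_pos hε, by rwa [mul_div_cancel₀ _ two_ne_zero]⟩
  have hball_δ : closedBall x₀ δ ⊆ Ω := (closedBall_subset_closedBall (by linarith)).trans hball
  obtain ⟨C, hC⟩ := (isCompact_closedBall x₀ (2 * δ)).exists_bound_of_continuousOn (hv.mono hball)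
  have closed := isClosed_setOf_exists_slope (K := K) (Ω := Ω)
    (b := (2 * C + |K| / 2 * δ ^ 2) / δ) (hv.mono hball_δ) (isCompact_closedBall x₀ δ)
  filter_upwards [closed.isOpen_compl.mem_nhds fun ⟨_, p, _, hp⟩ => hx₀.2 ⟨hx₀.1, p, hp⟩,
    closedBall_mem_nhds x₀ hδ] with x hx hxδ
  refine ⟨hball_δ hxδ, fun ⟨_, p, hp⟩ => hx ⟨hxδ, p, ?_, hp⟩⟩
  have hsub : closedBall x δ ⊆ closedBall x₀ (2 * δ) :=
    closedBall_subset_closedBall' (by linarith [mem_closedBall.1 hxδ])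
  exact mem_closedBall_zero_iff.2 <| norm_le_of_forall_add_inner_sub_le hδ (hsub.trans hball)
    (fun z hz => hC z (hsub hz)) hp

/-! ### Closed cubes -/

/-- The closed cube with center `c` and side length `r`. -/
def closedCube (c : Euc n) (r : ℝ) : Set (Euc n) := {x | ∀ i, |x i - c i| ≤ r / 2}

theorem norm_le_sqrt_mul_of_forall_abs_le {x : Euc n} {a : ℝ} (ha : 0 ≤ a)
    (h : ∀ i, |x i| ≤ a) : ‖x‖ ≤ √n * a := by
  rw [EuclideanSpace.norm_eq, Real.sqrt_le_left (by positivity), mul_pow,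
    Real.sq_sqrt (by positivity)]
  calc ∑ i, ‖x i‖ ^ 2 ≤ ∑ _i : Fin n, a ^ 2 := by
        gcongr with i
        exact h i
    _ = n * a ^ 2 := by simp

namespace closedCube

variable {c x : Euc n} {r : ℝ}

theorem norm_sub_le (hr : 0 ≤ r) (hx : x ∈ closedCube c r) : ‖x - c‖ ≤ √n * (r / 2) :=
  norm_le_sqrt_mul_of_forall_abs_le (by positivity) hx

theorem mem_of_norm_sub_le (hx : ‖x - c‖ ≤ r / 2) : x ∈ closedCube c r :=
  fun i => (PiLp.norm_apply_le (x - c) i).trans hx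

theorem lt_norm_sub_of_notMem (hx : x ∉ closedCube c r) : r / 2 < ‖x - c‖ :=
  not_le.1 fun h => hx (mem_of_norm_sub_le h)

theorem eq_preimage_ofLp : closedCube c r =
    WithLp.ofLp ⁻¹' Set.Icc (fun i => c i - r / 2) fun i => c i + r / 2 := by
  ext x
  simp only [closedCube, Set.mem_ofPred_eq, Set.mem_preimage, Set.mem_Icc, Pi.le_def, abs_le,
    ← forall_and]
  exact forall_congr' fun i => and_congr
    ⟨fun h => by linarith, fun h => by linarith⟩ ⟨fun h => by linarith, fun h => by linarith⟩

theorem volume_eq (c : Euc n) (r : ℝ) : volume (closedCube c r) = ENNReal.ofReal r ^ n := by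
  rw [eq_preimage_ofLp, (PiLp.volume_preserving_ofLp (Fin n)).measure_preimage
    measurableSet_Icc.nullMeasurableSet, Real.volume_Icc_pi]
  simp only [add_sub_sub_cancel, add_halves, Finset.prod_const, Finset.card_univ, Fintype.card_fin]

theorem isClosed : IsClosed (closedCube c r) := by
  rw [eq_preimage_ofLp]
  exact isClosed_Icc.preimage (PiLp.continuous_ofLp 2 _)

theorem isCompact (hr : 0 ≤ r) : IsCompact (closedCube c r) :=
  (isCompact_closedBall c (√n * (r / 2))).of_isClosed_subset isClosed fun x hx => by
    rw [mem_closedBall, dist_eq_norm]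
    exact norm_sub_le hr hx

theorem convex : Convex ℝ (closedCube c r) := by
  rw [eq_preimage_ofLp]
  exact (convex_Icc _ _).linear_preimage (WithLp.linearEquiv 2 ℝ (Fin n → ℝ)).toLinearMap

end closedCube

/-! ### Contact estimate in a cube -/

/-- The number `σ` of the theorem: the fraction of the unit cube that `Am` can occupy at each
step of the iteration. -/
def decayRatio (n : ℕ) (lam Lam : ℝ) : ℝ :=
  1 - (lam / (lam + ((n : ℝ) - 1) * Lam)) ^ n * (1 / (4 * √n)) ^ n

theorem decayRatio_eq (hn : 1 ≤ n) (hlam : 0 < lam) (hLam : lam ≤ Lam) :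
    decayRatio n lam Lam = 1 - (1 / (4 * √n) / (1 + ellipticityRatio n lam Lam)) ^ n := by
  have hβ := ellipticityRatio_nonneg hn hlam hLam
  have hdenom : lam + ((n : ℝ) - 1) * Lam = lam * (1 + ellipticityRatio n lam Lam) := by
    rw [ellipticityRatio]
    field_simp
  rw [decayRatio, hdenom, ← mul_pow]
  congr 2
  field_simp

theorem decayRatio_nonneg (hn : 1 ≤ n) (hlam : 0 < lam) (hLam : lam ≤ Lam) :
    0 ≤ decayRatio n lam Lam := by
  have hβ := ellipticityRatio_nonneg hn hlam hLam
  have hsq : 1 ≤ √(n : ℝ) := Real.one_le_sqrt.2 (by exact_mod_cast hn)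
  rw [decayRatio_eq hn hlam hLam, sub_nonneg]
  refine pow_le_one₀ (by positivity) ?_
  rw [div_div, div_le_one (by positivity)]
  nlinarith

theorem volume_Am_inter_closedCube_le_of_le_volume_Gm {K r : ℝ} {c : Euc n} (hn : 1 ≤ n)
    (hlam : 0 < lam) (hLam : lam ≤ Lam) (hΩ : IsOpen Ω) (hv : ContinuousOn v Ω) (hr : 0 ≤ r)
    (hGm : ENNReal.ofReal (r / (4 * √n)) ^ n ≤
      ENNReal.ofReal (1 + ellipticityRatio n lam Lam) ^ n *
        volume (Gm K v Ω ∩ closedCube c r)) (hQ : closedCube c r ⊆ Ω) :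
    volume (Am K v Ω ∩ closedCube c r) ≤
      ENNReal.ofReal (decayRatio n lam Lam) * volume (closedCube c r) := by
  have hβ := ellipticityRatio_nonneg hn hlam hLam
  have split : volume (closedCube c r) =
      volume (Am K v Ω ∩ closedCube c r) + volume (Gm K v Ω ∩ closedCube c r) := by
    rw [← measure_inter_add_sdiff (closedCube c r) (isOpen_Am hΩ hv K).measurableSet,
      Set.inter_comm]
    congr 2
    ext x
    simp only [Am, Set.mem_sdiff, Set.mem_inter_iff]
    have := @hQ x
    tauto
  have fraction : ENNReal.ofReal ((1 / (4 * √n) / (1 + ellipticityRatio n lam Lam)) ^ n) *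
      volume (closedCube c r) ≤ volume (Gm K v Ω ∩ closedCube c r) := by
    have hL : ENNReal.ofReal (1 + ellipticityRatio n lam Lam) ^ n ≠ 0 :=
      pow_ne_zero _ (ENNReal.ofReal_pos.2 (by positivity)).ne'
    refine (ENNReal.mul_le_mul_iff_right hL (by finiteness)).1 (hGm.trans' (le_of_eq ?_))
    rw [closedCube.volume_eq, ENNReal.ofReal_pow (by positivity), ← mul_pow, ← mul_pow,
      ← ENNReal.ofReal_mul (by positivity), ← ENNReal.ofReal_mul (by positivity)]
    congr 2
    field_simp
  have finite : volume (Gm K v Ω ∩ closedCube c r) ≠ ∞ :=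
    measure_ne_top_of_subset Set.inter_subset_right
      (closedCube.isCompact (c := c) hr).measure_lt_top.ne
  calc volume (Am K v Ω ∩ closedCube c r)
      = volume (closedCube c r) - volume (Gm K v Ω ∩ closedCube c r) :=
        ENNReal.eq_sub_of_add_eq finite split.symm
    _ ≤ volume (closedCube c r) -
          ENNReal.ofReal ((1 / (4 * √n) / (1 + ellipticityRatio n lam Lam)) ^ n) *
            volume (closedCube c r) := by gcongr
    _ = ENNReal.ofReal (decayRatio n lam Lam) * volume (closedCube c r) := by
        rw [decayRatio_eq hn hlam hLam, ENNReal.ofReal_sub _ (by positivity), ENNReal.ofReal_one,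
          ENNReal.sub_mul fun _ _ => (closedCube.isCompact (c := c) hr).measure_lt_top.ne, one_mul]

theorem volume_Am_inter_closedCube_le_of_forall_le {K r : ℝ} {c x₁ : Euc n} (hn : 1 ≤ n)
    (hlam : 0 < lam) (hLam : lam ≤ Lam) (hΩ : IsOpen Ω) (hv : ContinuousOn v Ω)
    (hsuper : ViscSupersol lam Lam Ω v) (hK : 0 < K) (hr : 0 ≤ r) (hQ : closedCube c r ⊆ Ω)
    (hx₁ : x₁ ∈ closedCube c r)
    (hfar : ∀ y ∈ closedBall c (r / 8), ∀ x ∈ Ω \ closedCube c r,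
      v x₁ + K / 2 * ‖x₁ - y‖ ^ 2 ≤ v x + K / 2 * ‖x - y‖ ^ 2) :
    volume (Am K v Ω ∩ closedCube c r) ≤
      ENNReal.ofReal (decayRatio n lam Lam) * volume (closedCube c r) := by
  have exists_contact : ∀ y ∈ closedCube c (r / (4 * √n)), ∃ x ∈ closedCube c r,
      x ∈ Ω ∧ IsMinOn (fun z => v z + K / 2 * ‖z - y‖ ^ 2) Ω x := fun y hy => by
    obtain ⟨x, hx, hmin⟩ := (closedCube.isCompact (c := c) hr).exists_isMinOn ⟨x₁, hx₁⟩
      ((hv.mono hQ).add (by fun_prop : ContinuousOn (fun z => K / 2 * ‖z - y‖ ^ 2) _))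
    refine ⟨x, hx, hQ hx, fun z hz => ?_⟩
    by_cases hzQ : z ∈ closedCube c r
    · exact hmin hzQ
    · refine (hmin hx₁).trans (hfar y ?_ z ⟨hz, hzQ⟩)
      rw [mem_closedBall, dist_eq_norm]
      refine (closedCube.norm_sub_le (by positivity) hy).trans_eq ?_
      field_simp
      ring
  choose! X hXQ hX using exists_contact
  refine volume_Am_inter_closedCube_le_of_le_volume_Gm hn hlam hLam hΩ hv hr ?_ hQ
  rw [← closedCube.volume_eq c]
  exact IsContactMap.volume_le hX hn hlam hLam hsuper hK closedCube.convex hXQ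

theorem le_mul_norm_sub_of_lt_norm_sub {E : Type*} [SeminormedAddCommGroup E] {c y z : E} {r : ℝ}
    (hy : ‖y - c‖ ≤ r / 8) (hz : r / 2 < ‖z - c‖) : r ≤ 8 / 3 * ‖z - y‖ := by
  linarith [norm_sub_le_norm_sub_add_norm_sub z y c]

theorem volume_Am_inter_closedCube_le_of_abs_le {K r m : ℝ} {c : Euc n} (hn : 1 ≤ n)
    (hlam : 0 < lam) (hLam : lam ≤ Lam) (hΩ : IsOpen Ω) (hv : ContinuousOn v Ω)
    (hsuper : ViscSupersol lam Lam Ω v) (hK : 0 < K) (hr : 0 ≤ r) (hQ : closedCube c r ⊆ Ω)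
    (hm : ∀ x ∈ Ω, |v x| ≤ m) (hKm : 32 * m ≤ K * r ^ 2) :
    volume (Am K v Ω ∩ closedCube c r) ≤
      ENNReal.ofReal (decayRatio n lam Lam) * volume (closedCube c r) := by
  have hc : c ∈ closedCube c r := closedCube.mem_of_norm_sub_le (by simpa using by positivity)
  refine volume_Am_inter_closedCube_le_of_forall_le hn hlam hLam hΩ hv hsuper hK hr hQ hc
    fun y hy x hx => ?_
  rw [mem_closedBall, dist_eq_norm] at hy
  have hxy := le_mul_norm_sub_of_lt_norm_sub hy (closedCube.lt_norm_sub_of_notMem hx.2)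
  have near : K / 2 * ‖c - y‖ ^ 2 ≤ K / 2 * (r / 8) ^ 2 := by
    rw [norm_sub_rev]
    gcongr
  have far : K / 2 * r ^ 2 ≤ K / 2 * (8 / 3 * ‖x - y‖) ^ 2 := by gcongr
  linarith [(abs_le.1 (hm c (hQ hc))).2, (abs_le.1 (hm x hx.1)).1]

/-! ### The radial barrier -/

theorem ViscSupersol.not_isLocalMinOn_radial (hsuper : ViscSupersol lam Lam Ω v) (hn : 1 ≤ n)
    (hlam : 0 < lam) (hLam : lam ≤ Lam) {x₀ c z : Euc n} (hx₀ : x₀ ∈ Ω) (hc : x₀ ≠ c) {A K : ℝ}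
    (hK : 0 ≤ K) (hA : (1 + ellipticityRatio n lam Lam) * K < ellipticityRatio n lam Lam *
      (A * (‖x₀ - c‖ ^ 2) ^ (-(ellipticityRatio n lam Lam / 2) - 1))) :
    ¬ IsLocalMinOn (fun x => v x - (A * (‖x - c‖ ^ 2) ^ (-(ellipticityRatio n lam Lam / 2)) -
      K / 2 * ‖x - z‖ ^ 2)) Ω x₀ := by
  have hβ := ellipticityRatio_nonneg hn hlam hLam
  set β := ellipticityRatio n lam Lam with hβ_def
  have hpos : 0 < ‖x₀ - c‖ ^ 2 := pow_pos (norm_pos_iff.2 (sub_ne_zero.2 hc)) 2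
  have hψ : ContDiffAt ℝ 2 (fun x => A * (‖x - c‖ ^ 2) ^ (-(β / 2))) x₀ :=
    contDiffAt_const.mul
      (((contDiffAt_id.sub contDiffAt_const).norm_sq ℝ).rpow_const_of_ne hpos.ne')
  have hlower : (‖x₀ - c‖ ^ 2) ^ (-(β / 2) - 2) * ‖x₀ - c‖ ^ 2 =
      (‖x₀ - c‖ ^ 2) ^ (-(β / 2) - 1) := by
    rw [← Real.rpow_add_one hpos.ne']
    ring_nf
  refine hsuper.not_isLocalMinOn hlam hLam hx₀ (sub_ne_zero.2 hc) hψ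
    (hessianMatrix_mul_norm_sub_sq_rpow _ _ hc) ?_ ?_
  · nlinarith
  · rw [← hβ_def, mul_assoc _ _ (‖x₀ - c‖ ^ 2), hlower]
    linarith

theorem exists_isLocalMin_sub_radial {A K g ρ R : ℝ} {c x : Euc n}
    (hv : ContinuousOn v (closedBall c R)) (hA : 0 < A) (hK : 0 ≤ K) (hg : g < 0) (hρ : 0 < ρ)
    (hx : x ∈ ball c R \ closedBall c ρ)
    (htouch : ∀ z ∈ closedBall c R, v x - K / 2 * ‖z - x‖ ^ 2 ≤ v z)
    (hinner : ∀ z ∈ closedBall c ρ, v x + A * (ρ ^ 2) ^ g ≤ v z) :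
    ∃ x₀ ∈ ball c R \ closedBall c ρ,
      IsLocalMin (fun z => v z - (A * (‖z - c‖ ^ 2) ^ g - K / 2 * ‖z - x‖ ^ 2)) x₀ := by
  simp only [← dist_eq_norm _ c]
  have hxR : dist x c < R := hx.1
  have hρx : ρ < dist x c := not_le.1 hx.2
  have hpow_lt : A * (R ^ 2) ^ g < A * (dist x c ^ 2) ^ g := by
    have : (dist x c ^ 2) < R ^ 2 := by gcongr
    exact mul_lt_mul_of_pos_left
      (Real.rpow_lt_rpow_of_neg (pow_pos (hρ.trans hρx) 2) this hg) hA
  have hpow_pos : 0 < A * (dist x c ^ 2) ^ g :=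
    mul_pos hA (Real.rpow_pos_of_pos (pow_pos (hρ.trans hρx) 2) g)
  refine ((isCompact_closedBall c R).diff (isOpen_ball (x := c) (ε := ρ)))
    |>.exists_isLocalMin_mem_open
      (Set.sdiff_subset_sdiff ball_subset_closedBall ball_subset_closedBall) ?_
      ⟨ball_subset_closedBall hx.1, Set.notMem_subset ball_subset_closedBall hx.2⟩ ?_
      (isOpen_ball.sdiff isClosed_closedBall)
  · refine (hv.mono Set.sdiff_subset).sub (.sub (continuousOn_const.mul ?_) (by fun_prop))
    refine ContinuousOn.rpow_const (by fun_prop) fun z hz => .inl ?_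
    exact (pow_pos (hρ.trans_le (not_lt.1 hz.2)) 2).ne'
  · rintro z ⟨⟨hzR, hzρ⟩, hz⟩
    simp only [sub_self, norm_zero, zero_pow two_ne_zero, mul_zero, sub_zero]
    rcases (le_of_not_gt hzρ : ρ ≤ dist z c).eq_or_lt with hz_eq | hz_gt
    · have := hinner z hz_eq.ge
      have : 0 ≤ K / 2 * ‖z - x‖ ^ 2 := by positivity
      rw [← hz_eq]
      linarith
    · have hz_eq : dist z c = R :=
        (mem_closedBall.1 hzR).eq_of_not_lt fun h => hz ⟨h, not_le.2 hz_gt⟩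
      rw [hz_eq]
      linarith [htouch z hzR]

theorem ViscSupersol.exists_mem_closedBall_le_s11 (hsuper : ViscSupersol lam Lam Ω v) (hn : 2 ≤ n)
    (hlam : 0 < lam) (hLam : lam ≤ Lam) (hv : ContinuousOn v Ω) {K ρ R : ℝ} (hK : 0 < K)
    (hρ : 0 < ρ) {c x : Euc n} (hball : closedBall c R ⊆ Ω) (hx : x ∈ ball c R)
    (htouch : ∀ z ∈ Ω, v x - K / 2 * ‖z - x‖ ^ 2 ≤ v z) :
    ∃ y ∈ closedBall c ρ,
      v y ≤ v x + 3 * K * R ^ 2 * (R / ρ) ^ ellipticityRatio n lam Lam := by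
  have hβ := one_le_ellipticityRatio hn hlam hLam
  obtain ⟨β, hβ_def⟩ : ∃ β, β = ellipticityRatio n lam Lam := ⟨_, rfl⟩
  by_contra! hcon
  rw [← hβ_def] at hβ hcon
  have hR : 0 < R := dist_nonneg.trans_lt hx
  obtain ⟨A, hA⟩ : ∃ A, A = 3 * K * (R ^ 2) ^ (β / 2 + 1) := ⟨_, rfl⟩
  have hA_pos : 0 < A := by rw [hA]; positivity
  have hA_ρ : A * (ρ ^ 2) ^ (-(β / 2)) = 3 * K * R ^ 2 * (R / ρ) ^ β := by
    rw [hA, Real.rpow_add_one (by positivity), Real.rpow_neg (by positivity),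
      ← Real.rpow_natCast_mul hR.le, ← Real.rpow_natCast_mul hρ.le, Nat.cast_two,
      mul_div_cancel₀ _ two_ne_zero, Real.div_rpow hR.le hρ.le]
    ring
  have hA_R : A * (R ^ 2) ^ (-(β / 2) - 1) = 3 * K := by
    rw [hA, mul_assoc, ← Real.rpow_add (by positivity), sub_eq_add_neg, ← neg_add, add_neg_cancel,
      Real.rpow_zero, mul_one]
  have hxρ : x ∉ closedBall c ρ := fun h =>
    (lt_add_of_pos_right _ (by positivity)).not_gt (hcon x h)
  obtain ⟨x₀, ⟨hx₀R, hx₀ρ⟩, hmin⟩ := exists_isLocalMin_sub_radial (hv.mono hball) hA_pos hK.le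
    (by linarith : -(β / 2) < 0) hρ ⟨hx, hxρ⟩ (fun z hz => htouch z (hball hz))
    fun z hz => hA_ρ ▸ (hcon z hz).le
  have hx₀c : x₀ ≠ c := fun h => hx₀ρ (h ▸ mem_closedBall_self hρ.le)
  have hA_x₀ : 3 * K ≤ A * (‖x₀ - c‖ ^ 2) ^ (-(β / 2) - 1) := by
    rw [← hA_R, ← dist_eq_norm]
    have : dist x₀ c ^ 2 ≤ R ^ 2 := by gcongr; exact hx₀R.le
    refine mul_le_mul_of_nonneg_left ?_ hA_pos.le
    exact Real.rpow_le_rpow_of_nonpos (pow_pos (dist_pos.2 hx₀c) 2) this (by linarith)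
  rw [hβ_def] at hmin
  refine hsuper.not_isLocalMinOn_radial (by lia) hlam hLam (hball (ball_subset_closedBall hx₀R))
    hx₀c hK.le ?_ (hmin.on Ω)
  rw [← hβ_def]
  nlinarith

/-! ### Propagation from a contact point to a neighbouring cube -/

/-- The number `M = 884736 n³ (36 n) ^ max (1, β - 1)` with `β = (n - 1) Λ / λ`: decay in a cube
holds for the opening `M * K` as soon as a nearby point belongs to `Gm K v Ω`. -/
def openingFactor (n : ℕ) (lam Lam : ℝ) : ℝ :=
  884736 * (n : ℝ) ^ 3 * (36 * (n : ℝ)) ^ max (1 : ℝ) (((n : ℝ) - 1) * Lam / lam - 1)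

theorem cube_le_openingFactor (lam Lam : ℝ) (hn : 1 ≤ n) :
    884736 * (n : ℝ) ^ 3 ≤ openingFactor n lam Lam := by
  have : (1 : ℝ) ≤ n := by exact_mod_cast hn
  refine le_mul_of_one_le_right (by positivity) (Real.one_le_rpow (by linarith) ?_)
  exact zero_le_one.trans (le_max_left _ _)

theorem rpow_le_openingFactor (hn : 1 ≤ n) (hlam : 0 < lam) (hLam : lam ≤ Lam) :
    24576 * (n : ℝ) ^ 2 * (24 * √n) ^ ellipticityRatio n lam Lam ≤ openingFactor n lam Lam := by
  have hn' : (1 : ℝ) ≤ n := by exact_mod_cast hn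
  have hβ := ellipticityRatio_nonneg hn hlam hLam
  have hsq : 24 * √(n : ℝ) ≤ 36 * n := by
    have : √(n : ℝ) ≤ n := Real.sqrt_le_self_iff.2 (.inr hn')
    linarith
  rw [openingFactor, ← ellipticityRatio]
  set α := max 1 (ellipticityRatio n lam Lam - 1)
  calc 24576 * (n : ℝ) ^ 2 * (24 * √n) ^ ellipticityRatio n lam Lam
      ≤ 24576 * (n : ℝ) ^ 2 * (36 * n) ^ ellipticityRatio n lam Lam := by gcongr
    _ ≤ 24576 * (n : ℝ) ^ 2 * (36 * n) ^ (α + 1) := by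
        gcongr
        · linarith
        · linarith [le_max_right 1 (ellipticityRatio n lam Lam - 1)]
    _ = 884736 * (n : ℝ) ^ 3 * (36 * n) ^ α := by
        rw [Real.rpow_add_one (by positivity)]
        ring

theorem add_le_openingFactor (hn : 1 ≤ n) (hlam : 0 < lam) (hLam : lam ≤ Lam) :
    192 * n * (24 * √n) ^ ellipticityRatio n lam Lam + 49 / 2 * n ≤
      5 / 18 * openingFactor n lam Lam := by
  have hn' : (1 : ℝ) ≤ n := by exact_mod_cast hn
  have hrpow : n * (24 * √n) ^ ellipticityRatio n lam Lam ≤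
      (n : ℝ) ^ 2 * (24 * √n) ^ ellipticityRatio n lam Lam := by
    gcongr
    exact le_self_pow₀ hn' two_ne_zero
  have hcube : (n : ℝ) ≤ n ^ 3 := le_self_pow₀ hn' three_ne_zero
  linarith [rpow_le_openingFactor hn hlam hLam, cube_le_openingFactor lam Lam hn]

theorem eight_le_openingFactor (lam Lam : ℝ) (hn : 1 ≤ n) : 8 ≤ openingFactor n lam Lam := by
  have : (1 : ℝ) ≤ (n : ℝ) ^ 3 := one_le_pow₀ (by exact_mod_cast hn)
  exact le_trans (by linarith) (cube_le_openingFactor lam Lam hn)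

theorem norm_sub_le_mul_norm_sub_of_lt_norm_sub {E : Type*} [SeminormedAddCommGroup E]
    {c x y z : E} {r s : ℝ} (hs : 1 ≤ s) (hx : ‖x - c‖ ≤ s * (2 * r)) (hy : ‖y - c‖ ≤ r / 8)
    (hz : r / 2 < ‖z - c‖) : ‖z - x‖ ≤ 7 * s * ‖z - y‖ := by
  have hr := le_mul_norm_sub_of_lt_norm_sub hy hz
  have hsr : s * r ≤ s * (8 / 3 * ‖z - y‖) := by gcongr
  have hsd : ‖z - y‖ ≤ s * ‖z - y‖ := le_mul_of_one_le_left (norm_nonneg _) hs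
  calc ‖z - x‖ ≤ ‖z - y‖ + (‖y - c‖ + ‖x - c‖) :=
        (norm_sub_le_norm_sub_add_norm_sub z y x).trans <| by
          gcongr
          exact norm_sub_rev x c ▸ norm_sub_le_norm_sub_add_norm_sub y c x
    _ ≤ 7 * s * ‖z - y‖ := by linarith [norm_nonneg (z - y)]

theorem add_mul_norm_sq_le_of_touching {E : Type*} [SeminormedAddCommGroup E] {w : E → ℝ}
    {c x x₁ y z : E} {r s K M T : ℝ} (hK : 0 < K) (hM₀ : 0 < M) (hT : 0 < T) (hr : 0 < r)
    (hs : 1 ≤ s) (hM : 192 * s ^ 2 * T + 49 / 2 * s ^ 2 ≤ 5 / 18 * M)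
    (hx : ‖x - c‖ ≤ s * (2 * r)) (hx₁ : ‖x₁ - c‖ ≤ r / 8) (hy : ‖y - c‖ ≤ r / 8)
    (hz : r / 2 < ‖z - c‖) (low : w x₁ ≤ w x + 3 * K * (3 * s * r) ^ 2 * T)
    (htouch : w x - K / 2 * ‖z - x‖ ^ 2 ≤ w z) :
    w x₁ + M * K / 2 * ‖x₁ - y‖ ^ 2 ≤ w z + M * K / 2 * ‖z - y‖ ^ 2 := by
  have hzx := norm_sub_le_mul_norm_sub_of_lt_norm_sub hs hx hy hz
  have hrd := le_mul_norm_sub_of_lt_norm_sub hy hz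
  have hx₁y : ‖x₁ - y‖ ≤ 2 / 3 * ‖z - y‖ := by
    linarith [norm_sub_le_norm_sub_add_norm_sub x₁ c y, norm_sub_rev c y]
  have barrier_term : 3 * K * (3 * s * r) ^ 2 * T ≤
      3 * K * (3 * s * (8 / 3 * ‖z - y‖)) ^ 2 * T := by gcongr
  have touching_term : K / 2 * ‖z - x‖ ^ 2 ≤ K / 2 * (7 * s * ‖z - y‖) ^ 2 := by gcongr
  have vertex_term : M * K / 2 * ‖x₁ - y‖ ^ 2 ≤ M * K / 2 * (2 / 3 * ‖z - y‖) ^ 2 := by gcongr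
  have hM' := mul_le_mul_of_nonneg_left hM (by positivity : 0 ≤ K * ‖z - y‖ ^ 2)
  linarith

theorem volume_Am_inter_closedCube_le_of_forall_sub_le {K r : ℝ} {c x : Euc n} (hn : 2 ≤ n)
    (hlam : 0 < lam) (hLam : lam ≤ Lam) (hΩ : IsOpen Ω) (hv : ContinuousOn v Ω)
    (hsuper : ViscSupersol lam Lam Ω v) (hK : 0 < K) (hr : 0 < r)
    (hball : closedBall c (3 * √n * r) ⊆ Ω) (hxc : ‖x - c‖ ≤ √n * (2 * r))
    (htouch : ∀ z ∈ Ω, v x - K / 2 * ‖z - x‖ ^ 2 ≤ v z) :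
    volume (Am (openingFactor n lam Lam * K) v Ω ∩ closedCube c r) ≤
      ENNReal.ofReal (decayRatio n lam Lam) * volume (closedCube c r) := by
  have hn₁ : 1 ≤ n := by lia
  have hsq : 1 ≤ √(n : ℝ) := Real.one_le_sqrt.2 (by exact_mod_cast hn₁)
  have hsqr : 0 < √(n : ℝ) * r := by positivity
  have hM_pos : 0 < openingFactor n lam Lam := by
    linarith [eight_le_openingFactor lam Lam hn₁]
  have hQ : closedCube c r ⊆ Ω := fun z hz => hball <| by
    rw [mem_closedBall, dist_eq_norm]
    linarith [closedCube.norm_sub_le hr.le hz]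
  obtain ⟨x₁, hx₁, low⟩ := hsuper.exists_mem_closedBall_le_s11 hn hlam hLam hv hK
    (by positivity : 0 < r / 8) hball
    (x := x) (by rw [mem_ball, dist_eq_norm]; linarith) htouch
  rw [show 3 * √n * r / (r / 8) = 24 * √n by field_simp; ring] at low
  rw [mem_closedBall, dist_eq_norm] at hx₁
  refine volume_Am_inter_closedCube_le_of_forall_le hn₁ hlam hLam hΩ hv hsuper (by positivity)
    hr.le hQ (closedCube.mem_of_norm_sub_le (x := x₁) (by linarith)) fun y hy z hz => ?_
  rw [mem_closedBall, dist_eq_norm] at hy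
  refine add_mul_norm_sq_le_of_touching hK hM_pos
    (Real.rpow_pos_of_pos (by positivity) (ellipticityRatio n lam Lam)) hr hsq ?_ hxc hx₁ hy
    (closedCube.lt_norm_sub_of_notMem hz.2) low (htouch z hz.1)
  rw [Real.sq_sqrt n.cast_nonneg]
  exact add_le_openingFactor hn₁ hlam hLam

theorem volume_Am_inter_closedCube_le_of_mem_Gm {K r : ℝ} {c x : Euc n} (hn : 2 ≤ n)
    (hlam : 0 < lam) (hLam : lam ≤ Lam) (hΩ : IsOpen Ω) (hv : ContinuousOn v Ω)
    (hsuper : ViscSupersol lam Lam Ω v) (hK : 0 < K) (hr : 0 < r)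
    (hball : closedBall c (3 * √n * r) ⊆ Ω) (hx : x ∈ Gm K v Ω) (hxc : ∀ i, |x i - c i| ≤ 2 * r) :
    volume (Am (openingFactor n lam Lam * K) v Ω ∩ closedCube c r) ≤
      ENNReal.ofReal (decayRatio n lam Lam) * volume (closedCube c r) := by
  obtain ⟨-, p, hp⟩ := hx
  rw [← Am_sub_inner _ p]
  refine volume_Am_inter_closedCube_le_of_forall_sub_le hn hlam hLam hΩ
    (hv.sub (by fun_prop)) (hsuper.sub_inner p) hK hr hball
    (norm_le_sqrt_mul_of_forall_abs_le (by positivity) hxc) fun z hz => ?_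
  have := hp z hz
  rw [inner_sub_right] at this
  linarith

/-! ### Calderón–Zygmund covering -/

section Partition

variable {α ι : Type*} {P : ℕ → α → ι} {B : Set α} {i j : ℕ} {x y : α}

/-- The cell of `x` in the `j`-th of a sequence of partitions of `α`, each given by the fibers of
a map `P j`. -/
def partitionCell (P : ℕ → α → ι) (j : ℕ) (x : α) : Set α := {y | P j y = P j x}

/-- The cell of `x` at level `j` is a maximal one inside `B`: it is contained in `B`, and none of
the cells of `x` at earlier levels is. -/
def IsMaximalCell (P : ℕ → α → ι) (B : Set α) (j : ℕ) (x : α) : Prop :=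
  partitionCell P j x ⊆ B ∧ ∀ i < j, ¬ partitionCell P i x ⊆ B

theorem mem_partitionCell_self : x ∈ partitionCell P j x := rfl

theorem partitionCell_eq_of_mem (h : y ∈ partitionCell P j x) :
    partitionCell P j y = partitionCell P j x := by
  ext z
  exact Eq.congr_right h

namespace IsMaximalCell

theorem mem (h : IsMaximalCell P B j x) : x ∈ B := h.1 mem_partitionCell_self

theorem exists_of_subset (h : partitionCell P j x ⊆ B) : ∃ i, IsMaximalCell P B i x := by
  classical
  have hex : ∃ j, partitionCell P j x ⊆ B := ⟨j, h⟩
  exact ⟨Nat.find hex, Nat.find_spec hex, fun _ => Nat.find_min hex⟩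

theorem level_unique (hi : IsMaximalCell P B i x) (hj : IsMaximalCell P B j x) : i = j :=
  le_antisymm (not_lt.1 fun h => hi.2 j h hj.1) (not_lt.1 fun h => hj.2 i h hi.1)

theorem of_mem (hnested : ∀ i j, i ≤ j → ∀ x y, P j x = P j y → P i x = P i y)
    (h : IsMaximalCell P B j x) (hy : y ∈ partitionCell P j x) : IsMaximalCell P B j y := by
  have cells_eq : ∀ i ≤ j, partitionCell P i y = partitionCell P i x := fun i hij =>
    partitionCell_eq_of_mem (hnested i j hij y x hy)
  exact ⟨(cells_eq j le_rfl).trans_subset h.1, fun i hi => cells_eq i hi.le ▸ h.2 i hi⟩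

end IsMaximalCell

theorem measure_inter_le_mul_of_forall_isMaximalCell [MeasurableSpace α] [MeasurableSpace ι]
    [MeasurableSingletonClass ι] [Countable ι] {μ : Measure α} {A : Set α} {σ : ℝ≥0∞}
    (hP : ∀ j, Measurable (P j)) (hnested : ∀ i j, i ≤ j → ∀ x y, P j x = P j y → P i x = P i y)
    (hB : ∀ x ∈ B, ∃ j, partitionCell P j x ⊆ B)
    (hA : ∀ j x, IsMaximalCell P B j x →
      μ (A ∩ partitionCell P j x) ≤ σ * μ (partitionCell P j x)) :
    μ (A ∩ B) ≤ σ * μ B := by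
  obtain ⟨D, hD⟩ : ∃ D : ℕ × ι → Set α, ∀ q, D q = {x | IsMaximalCell P B q.1 x ∧ P q.1 x = q.2} :=
    ⟨_, fun _ => rfl⟩
  have empty_or_cell : ∀ q, D q = ∅ ∨
      ∃ x, IsMaximalCell P B q.1 x ∧ D q = partitionCell P q.1 x := fun q => by
    refine (D q).eq_empty_or_nonempty.imp_right fun ⟨x, hx⟩ => ?_
    obtain ⟨hmax, hxq⟩ := hD q ▸ hx
    refine ⟨x, hmax, ?_⟩
    ext y
    rw [hD, Set.mem_ofPred_eq, ← hxq]
    exact ⟨And.right, fun hy => ⟨hmax.of_mem hnested hy, hy⟩⟩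
  have measurable : ∀ q, MeasurableSet (D q) := fun q => by
    rcases empty_or_cell q with h | ⟨x, -, h⟩ <;> rw [h]
    · exact .empty
    · exact hP _ (measurableSet_singleton _)
  have disjoint : Pairwise (Function.onFun Disjoint D) := fun q q' hne => by
    refine Set.disjoint_left.2 fun x hx hx' => hne ?_
    obtain ⟨hmax, hxq⟩ := hD q ▸ hx
    obtain ⟨hmax', hxq'⟩ := hD q' ▸ hx'
    have hlevel := hmax.level_unique hmax'
    exact Prod.ext hlevel (by rw [← hxq, ← hxq', hlevel])
  have union : B = ⋃ q, D q := by
    ext x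
    simp only [Set.mem_iUnion, hD, Set.mem_ofPred_eq]
    refine ⟨fun hx => ?_, fun ⟨q, hmax, _⟩ => hmax.mem⟩
    obtain ⟨j, hj⟩ := (hB x hx).elim fun _ => IsMaximalCell.exists_of_subset
    exact ⟨(j, P j x), hj, rfl⟩
  have density : ∀ q, μ (A ∩ D q) ≤ σ * μ (D q) := fun q => by
    rcases empty_or_cell q with h | ⟨x, hmax, h⟩ <;> rw [h]
    · simp
    · exact hA _ x hmax
  calc μ (A ∩ B) = μ (⋃ q, A ∩ D q) := by rw [← Set.inter_iUnion, ← union]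
    _ ≤ ∑' q, μ (A ∩ D q) := measure_iUnion_le _
    _ ≤ ∑' q, σ * μ (D q) := ENNReal.tsum_le_tsum density
    _ = σ * μ B := by rw [ENNReal.tsum_mul_left, ← measure_iUnion disjoint measurable, ← union]

end Partition

/-! ### Dyadic cubes -/

/-- The index of the dyadic cube of generation `j` containing `x`, for the half-open dyadic cubes
obtained by repeatedly bisecting `[-1/2, 1/2)ⁿ` and its integer translates. -/
def dyadicIndex (j : ℕ) (x : Euc n) : Fin n → ℤ := fun i => ⌊(2 : ℝ) ^ j * (x i + 1 / 2)⌋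

/-- The half-open dyadic cube of generation `j`, of side length `(2 ^ j)⁻¹`, containing `x`. -/
abbrev dyadicCube (j : ℕ) (x : Euc n) : Set (Euc n) := partitionCell dyadicIndex j x

/-- The center of `dyadicCube j x`. -/
def dyadicCenter (j : ℕ) (x : Euc n) : Euc n :=
  WithLp.toLp 2 fun i => ((dyadicIndex j x i : ℝ) + 1 / 2) * ((2 : ℝ) ^ j)⁻¹ - 1 / 2

theorem measurable_dyadicIndex (j : ℕ) : Measurable (dyadicIndex (n := n) j) :=
  measurable_pi_iff.2 fun i => Int.measurable_floor.comp (by fun_prop)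

theorem dyadicIndex_eq_succ_ediv (j : ℕ) (x : Euc n) (i : Fin n) :
    dyadicIndex j x i = dyadicIndex (j + 1) x i / 2 := by
  have half : (2 : ℝ) ^ j * (x i + 1 / 2) = 2 ^ (j + 1) * (x i + 1 / 2) / (2 : ℕ) := by
    rw [pow_succ]
    push_cast
    ring
  rw [dyadicIndex, half, Int.floor_div_natCast]
  rfl

theorem dyadicIndex_eq_of_le (i j : ℕ) (hij : i ≤ j) (x y : Euc n)
    (h : dyadicIndex j x = dyadicIndex j y) : dyadicIndex i x = dyadicIndex i y := by
  induction j, hij using Nat.le_induction with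
  | base => exact h
  | succ j _ ih =>
    refine ih (funext fun k => ?_)
    rw [dyadicIndex_eq_succ_ediv, h, ← dyadicIndex_eq_succ_ediv]

namespace dyadicCube

variable {x y z : Euc n} {j : ℕ}

theorem mem_iff : y ∈ dyadicCube j x ↔ ∀ i, dyadicCenter j x i - ((2 : ℝ) ^ j)⁻¹ / 2 ≤ y i ∧
    y i < dyadicCenter j x i + ((2 : ℝ) ^ j)⁻¹ / 2 := by
  have hr : (0 : ℝ) < ((2 : ℝ) ^ j)⁻¹ := by positivity
  refine funext_iff.trans (forall_congr' fun i => ?_)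
  have scale : y i + 1 / 2 = (2 : ℝ) ^ j * (y i + 1 / 2) * ((2 : ℝ) ^ j)⁻¹ := by field_simp
  have hc : dyadicCenter j x i = ((dyadicIndex j x i : ℝ) + 1 / 2) * ((2 : ℝ) ^ j)⁻¹ - 1 / 2 := rfl
  rw [show dyadicIndex j y i = ⌊(2 : ℝ) ^ j * (y i + 1 / 2)⌋ from rfl, Int.floor_eq_iff,
    ← mul_le_mul_iff_left₀ hr, ← mul_lt_mul_iff_left₀ hr, ← scale, hc]
  exact and_congr ⟨fun h => by linarith, fun h => by linarith⟩
    ⟨fun h => by linarith, fun h => by linarith⟩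

theorem subset_closedCube : dyadicCube j x ⊆ closedCube (dyadicCenter j x) ((2 : ℝ) ^ j)⁻¹ :=
  fun y hy i => by
    obtain ⟨lower, upper⟩ := mem_iff.1 hy i
    exact abs_le.2 ⟨by linarith, by linarith⟩

theorem dyadicCenter_mem : dyadicCenter j x ∈ dyadicCube j x := by
  have hr : (0 : ℝ) < ((2 : ℝ) ^ j)⁻¹ := by positivity
  exact mem_iff.2 fun i => ⟨by linarith, by linarith⟩

theorem abs_sub_le (hy : y ∈ dyadicCube j x) (hz : z ∈ dyadicCube j x) (i : Fin n) :
    |y i - z i| ≤ ((2 : ℝ) ^ j)⁻¹ := by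
  obtain ⟨lower_y, upper_y⟩ := mem_iff.1 hy i
  obtain ⟨lower_z, upper_z⟩ := mem_iff.1 hz i
  exact abs_le.2 ⟨by linarith, by linarith⟩

theorem subset_of_mem {i : ℕ} (hij : i ≤ j) (hx : x ∈ dyadicCube i z) :
    dyadicCube j x ⊆ dyadicCube i z :=
  fun y hy => (dyadicIndex_eq_of_le i j hij y x hy).trans hx

theorem volume_eq : volume (dyadicCube j x) =
    volume (closedCube (dyadicCenter j x) ((2 : ℝ) ^ j)⁻¹) := by
  have preimage : dyadicCube j x = WithLp.ofLp ⁻¹' Set.univ.pi fun i =>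
      Set.Ico (dyadicCenter j x i - ((2 : ℝ) ^ j)⁻¹ / 2)
        (dyadicCenter j x i + ((2 : ℝ) ^ j)⁻¹ / 2) := by
    ext y
    simp only [mem_iff, Set.mem_preimage, Set.mem_univ_pi, Set.mem_Ico]
  rw [preimage, (PiLp.volume_preserving_ofLp (Fin n)).measure_preimage
    (MeasurableSet.univ_pi fun _ => measurableSet_Ico).nullMeasurableSet, Real.volume_pi_Ico,
    closedCube.volume_eq]
  simp only [add_sub_sub_cancel, add_halves, Finset.prod_const, Finset.card_univ, Fintype.card_fin]

theorem exists_subset_of_isOpen {U : Set (Euc n)} (hU : IsOpen U) (hx : x ∈ U) :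
    ∃ j, dyadicCube j x ⊆ U := by
  obtain ⟨ε, hε, hball⟩ := Metric.isOpen_iff.1 hU x hx
  obtain ⟨j, hj⟩ := exists_pow_lt_of_lt_one (show 0 < ε / (√n + 1) by positivity)
    (show (2⁻¹ : ℝ) < 1 by norm_num)
  rw [lt_div_iff₀ (by positivity), inv_pow] at hj
  have hr : (0 : ℝ) < ((2 : ℝ) ^ j)⁻¹ := by positivity
  refine ⟨j, fun y hy => hball ?_⟩
  rw [mem_ball, dist_eq_norm]
  refine (norm_le_sqrt_mul_of_forall_abs_le hr.le
    (abs_sub_le hy mem_partitionCell_self)).trans_lt ?_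
  linarith

end dyadicCube

theorem dyadicCenter_zero_zero : dyadicCenter 0 (0 : Euc n) = 0 := by
  have : ⌊(2⁻¹ : ℝ)⌋ = 0 := Int.floor_eq_zero_iff.2 ⟨by norm_num, by norm_num⟩
  ext i
  simp [dyadicCenter, dyadicIndex, this]

theorem cube_one_zero_subset_dyadicCube : cube 1 0 ⊆ dyadicCube 0 (0 : Euc n) := fun x hx => by
  refine dyadicCube.mem_iff.2 fun i => ?_
  have := abs_lt.1 (hx i)
  simp only [PiLp.zero_apply, sub_zero] at this
  simp only [dyadicCenter_zero_zero, PiLp.zero_apply, pow_zero, inv_one]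
  exact ⟨by linarith, by linarith⟩

theorem dyadicCube_zero_zero_subset_closedCube : dyadicCube 0 (0 : Euc n) ⊆ closedCube 0 1 := by
  simpa only [dyadicCenter_zero_zero, pow_zero, inv_one] using
    dyadicCube.subset_closedCube (j := 0) (x := (0 : Euc n))

theorem volume_dyadicCube_zero_zero :
    volume (dyadicCube 0 (0 : Euc n)) = volume (closedCube (0 : Euc n) 1) := by
  simp only [dyadicCube.volume_eq, dyadicCenter_zero_zero, pow_zero, inv_one]

theorem closedCube_zero_one_subset_closedBall :
    closedCube 0 1 ⊆ closedBall (0 : Euc n) (2 * √n) := fun x hx => by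
  have := closedCube.norm_sub_le zero_le_one hx
  rw [mem_closedBall, dist_eq_norm]
  linarith [Real.sqrt_nonneg n]

/-! ### Decay of the contact sets -/

theorem closedBall_dyadicCenter_subset {j : ℕ} {x : Euc n} (hj : 1 ≤ j)
    (hx : x ∈ dyadicCube 0 (0 : Euc n)) :
    closedBall (dyadicCenter j x) (3 * √n * ((2 : ℝ) ^ j)⁻¹) ⊆ closedBall 0 (2 * √n) := by
  have center_mem : dyadicCenter j x ∈ dyadicCube 0 (0 : Euc n) :=
    dyadicCube.subset_of_mem j.zero_le hx dyadicCube.dyadicCenter_mem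
  have center_le :=
    closedCube.norm_sub_le zero_le_one (dyadicCube_zero_zero_subset_closedCube center_mem)
  have side_le : ((2 : ℝ) ^ j)⁻¹ ≤ 1 / 2 := by
    rw [one_div]
    exact inv_anti₀ two_pos (le_self_pow₀ one_le_two (by lia))
  refine closedBall_subset_closedBall' ?_
  rw [dist_eq_norm]
  nlinarith [Real.sqrt_nonneg n]

theorem volume_Am_inter_dyadicCube_zero_le {K : ℝ} (hn : 1 ≤ n) (hlam : 0 < lam)
    (hLam : lam ≤ Lam) (hΩ : IsOpen Ω) (hB : closedBall 0 (2 * √n) ⊆ Ω) (hv : ContinuousOn v Ω)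
    (hsuper : ViscSupersol lam Lam Ω v) (hbd : ∀ x ∈ Ω, |v x| ≤ 1 / 4) (hK : 8 ≤ K) :
    volume (Am K v Ω ∩ dyadicCube 0 0) ≤
      ENNReal.ofReal (decayRatio n lam Lam) * volume (dyadicCube 0 (0 : Euc n)) := by
  rw [volume_dyadicCube_zero_zero]
  refine (measure_mono (Set.inter_subset_inter_right _
    dyadicCube_zero_zero_subset_closedCube)).trans ?_
  exact volume_Am_inter_closedCube_le_of_abs_le hn hlam hLam hΩ hv hsuper (by linarith)
    zero_le_one (closedCube_zero_one_subset_closedBall.trans hB) hbd (by linarith)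

theorem volume_Am_inter_dyadicCube_succ_le {K : ℝ} {j : ℕ} {x : Euc n} (hn : 2 ≤ n)
    (hlam : 0 < lam) (hLam : lam ≤ Lam) (hΩ : IsOpen Ω) (hB : closedBall 0 (2 * √n) ⊆ Ω)
    (hv : ContinuousOn v Ω) (hsuper : ViscSupersol lam Lam Ω v) (hK : 0 < K)
    (hx : x ∈ dyadicCube 0 (0 : Euc n)) (hparent : ¬ dyadicCube j x ⊆ Am K v Ω ∩ dyadicCube 0 0) :
    volume (Am (openingFactor n lam Lam * K) v Ω ∩ dyadicCube (j + 1) x) ≤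
      ENNReal.ofReal (decayRatio n lam Lam) * volume (dyadicCube (j + 1) x) := by
  obtain ⟨y, hy, hyB⟩ := Set.not_subset.1 hparent
  have hy₀ : y ∈ dyadicCube 0 (0 : Euc n) :=
    dyadicCube.subset_of_mem j.zero_le hx hy
  have hyΩ : y ∈ Ω :=
    hB (closedCube_zero_one_subset_closedBall (dyadicCube_zero_zero_subset_closedCube hy₀))
  have hyG : y ∈ Gm K v Ω := by_contra fun h => hyB ⟨⟨hyΩ, h⟩, hy₀⟩
  have hyc : ∀ i, |y i - dyadicCenter (j + 1) x i| ≤ 2 * ((2 : ℝ) ^ (j + 1))⁻¹ := fun i => by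
    have center_mem : dyadicCenter (j + 1) x ∈ dyadicCube j x :=
      dyadicCube.subset_of_mem j.le_succ mem_partitionCell_self dyadicCube.dyadicCenter_mem
    refine (dyadicCube.abs_sub_le hy center_mem i).trans_eq ?_
    rw [pow_succ]
    field_simp
  rw [dyadicCube.volume_eq]
  exact (measure_mono (Set.inter_subset_inter_right _ dyadicCube.subset_closedCube)).trans <|
    volume_Am_inter_closedCube_le_of_mem_Gm hn hlam hLam hΩ hv hsuper hK (by positivity)
      ((closedBall_dyadicCenter_subset (by lia) hx).trans hB) hyG hyc

theorem volume_Am_openingFactor_mul_le {K : ℝ} (hn : 2 ≤ n) (hlam : 0 < lam) (hLam : lam ≤ Lam)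
    (hΩ : IsOpen Ω) (hB : closedBall 0 (2 * √n) ⊆ Ω) (hv : ContinuousOn v Ω)
    (hsuper : ViscSupersol lam Lam Ω v) (hbd : ∀ x ∈ Ω, |v x| ≤ 1 / 4) (hK : 1 ≤ K) :
    volume (Am (openingFactor n lam Lam * K) v Ω ∩ dyadicCube 0 0) ≤
      ENNReal.ofReal (decayRatio n lam Lam) * volume (Am K v Ω ∩ dyadicCube 0 0) := by
  have hM := eight_le_openingFactor lam Lam (by lia : 1 ≤ n)
  have hKM : K ≤ openingFactor n lam Lam * K := le_mul_of_one_le_left (by linarith) (by linarith)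
  have eq_inter : Am (openingFactor n lam Lam * K) v Ω ∩ dyadicCube 0 0 =
      Am (openingFactor n lam Lam * K) v Ω ∩ (Am K v Ω ∩ dyadicCube 0 0) := by
    rw [← Set.inter_assoc, Set.inter_eq_left.2 (Am_anti hKM)]
  rw [eq_inter]
  refine measure_inter_le_mul_of_forall_isMaximalCell measurable_dyadicIndex dyadicIndex_eq_of_le
    (fun x hx => ?_) fun j x hmax => ?_
  · obtain ⟨j, hj⟩ := dyadicCube.exists_subset_of_isOpen (isOpen_Am hΩ hv K) hx.1
    exact ⟨j, Set.subset_inter hj (dyadicCube.subset_of_mem j.zero_le hx.2)⟩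
  · cases j with
    | zero =>
      rw [partitionCell_eq_of_mem hmax.mem.2]
      exact volume_Am_inter_dyadicCube_zero_le (by lia) hlam hLam hΩ hB hv hsuper hbd
        (by nlinarith)
    | succ j =>
      exact volume_Am_inter_dyadicCube_succ_le hn hlam hLam hΩ hB hv hsuper (by linarith)
        hmax.mem.2 (hmax.2 j j.lt_succ_self)

theorem volume_Am_openingFactor_pow_le (hn : 2 ≤ n) (hlam : 0 < lam) (hLam : lam ≤ Lam)
    (hΩ : IsOpen Ω) (hB : closedBall 0 (2 * √n) ⊆ Ω) (hv : ContinuousOn v Ω)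
    (hsuper : ViscSupersol lam Lam Ω v) (hbd : ∀ x ∈ Ω, |v x| ≤ 1 / 4) (k : ℕ) :
    volume (Am (openingFactor n lam Lam ^ k) v Ω ∩ dyadicCube 0 0) ≤
      ENNReal.ofReal (decayRatio n lam Lam ^ k) := by
  have hM := eight_le_openingFactor lam Lam (by lia : 1 ≤ n)
  induction k with
  | zero =>
    refine (measure_mono Set.inter_subset_right).trans_eq ?_
    rw [volume_dyadicCube_zero_zero, closedCube.volume_eq, ENNReal.ofReal_one, one_pow, pow_zero,
      ENNReal.ofReal_one]
  | succ k ih =>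
    rw [pow_succ', pow_succ', ENNReal.ofReal_mul (decayRatio_nonneg (by lia) hlam hLam)]
    refine (volume_Am_openingFactor_mul_le hn hlam hLam hΩ hB hv hsuper hbd
      (one_le_pow₀ (by linarith))).trans ?_
    gcongr

end

/-- geometric decay |A⁻_{M^k}(v,Ω) ∩ Q₁| ≤ σ^k with explicit σ and M. -/
theorem stmt_11 (n : ℕ) (hn : 2 ≤ n) (lam Lam : ℝ) (hlam : 0 < lam) (hLam : lam ≤ Lam)
    (Ω : Set (Euc n)) (hΩ : IsOpen Ω) (hB : closedBall 0 (2 * Real.sqrt n) ⊆ Ω)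
    (v : Euc n → ℝ) (hv : ContinuousOn v Ω) (hsuper : ViscSupersol lam Lam Ω v)
    (hbd : ∀ x ∈ Ω, |v x| ≤ 1 / 4) :
    ∀ k : ℕ,
      volume (Am ((884736 * (n : ℝ) ^ 3 *
          (36 * (n : ℝ)) ^ (max (1 : ℝ) (((n : ℝ) - 1) * Lam / lam - 1))) ^ k) v Ω ∩ cube 1 0)
        ≤ ENNReal.ofReal
            ((1 - (lam / (lam + ((n : ℝ) - 1) * Lam)) ^ n * (1 / (4 * Real.sqrt n)) ^ n) ^ k) :=
  fun k => (measure_mono (Set.inter_subset_inter_right _ cube_one_zero_subset_dyadicCube)).trans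
    (volume_Am_openingFactor_pow_le hn hlam hLam hΩ hB hv hsuper hbd k)
end
end
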